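/- arXiv:1302.3859 — 2 statements merged into one kernel-verified Lean document; each statement's English description precedes it below -/
import Mathlib

section
/- Let (F_0, a) be initial data for the completion problem in ℂ^d, let λ = λ↑(S_0), and let F = (F_0, G) ∈ C_a^op(F_0) with μ = λ(S_G) (arranged in decreasing order). Then there exists an orthonormal basis {v_1,…,v_d} of ℂ^d such that S_0 v_i = λ_i v_i for every i, S_G = Σ_{i=1}^d μ_i · v_i v_i^*, and consequently S_F = S_0 + S_G = Σ_{i=1}^d (λ_i + μ_i) · v_i v_i^*. -/
open Finset
open scoped ComplexOrder

noncomputable def sortAsc {m : ℕ} (x : Fin m → ℝ) : Fin m → ℝ :=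
  x ∘ Tuple.sort x

noncomputable def sortDesc {m : ℕ} (x : Fin m → ℝ) : Fin m → ℝ :=
  fun i => (x ∘ Tuple.sort x) i.rev

noncomputable def pad {k : ℕ} (x : Fin k → ℝ) (m : ℕ) : Fin m → ℝ :=
  fun i => if h : (i : ℕ) < k then x ⟨i, h⟩ else 0

/-- `MajorizedBy x y` means `x ≺ y`. -/
def MajorizedBy {m : ℕ} (x y : Fin m → ℝ) : Prop :=
  (∀ j : Fin m, ∑ i ∈ Finset.Iic j, sortDesc x i ≤ ∑ i ∈ Finset.Iic j, sortDesc y i) ∧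
    ∑ i, x i = ∑ i, y i

/-- Majorization of vectors of possibly different lengths, padding with zeros. -/
def MajorizedByPad {k m : ℕ} (x : Fin k → ℝ) (y : Fin m → ℝ) : Prop :=
  MajorizedBy (pad x (max k m)) (pad y (max k m))

/-- The frame operator `S_F = ∑ f_i f_i^*` of a finite sequence of vectors in `ℂ^d`. -/
noncomputable def frameOp {d n : ℕ} (F : Fin n → Fin d → ℂ) : Matrix (Fin d) (Fin d) ℂ :=
  ∑ l, Matrix.vecMulVec (F l) (star (F l))

/-- The squared norm `‖g‖²` of a vector in `ℂ^d`. -/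
noncomputable def normSqVec {d : ℕ} (g : Fin d → ℂ) : ℝ :=
  ∑ i, Complex.normSq (g i)

open scoped Classical in
/-- Eigenvalues of a (Hermitian) matrix arranged in decreasing order. -/
noncomputable def eigsDesc {d : ℕ} (S : Matrix (Fin d) (Fin d) ℂ) : Fin d → ℝ :=
  if h : S.IsHermitian then sortDesc h.eigenvalues else 0

open scoped Classical in
/-- Eigenvalues of a (Hermitian) matrix arranged in increasing order. -/
noncomputable def eigsAsc {d : ℕ} (S : Matrix (Fin d) (Fin d) ℂ) : Fin d → ℝ :=
  if h : S.IsHermitian then sortAsc h.eigenvalues else 0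

/-- `Γ_d(a)`: non-increasing nonnegative vectors in `ℝ^d` majorizing `a`. -/
def Gamma {k : ℕ} (d : ℕ) (a : Fin k → ℝ) : Set (Fin d → ℝ) :=
  {μ | Antitone μ ∧ (∀ i, 0 ≤ μ i) ∧ MajorizedByPad a μ}

/-- The convex potential `P_f = tr f(S) = ∑ f(λ_i(S))`. -/
noncomputable def potential {d : ℕ} (f : ℝ → ℝ) (S : Matrix (Fin d) (Fin d) ℂ) : ℝ :=
  ∑ i, f (eigsDesc S i)

/-- Final averages `Q_{j,r} = (1/(r-j)) (∑_{i=j+1}^k a_i + ∑_{i=j+1}^r λ_i)` (1-based). -/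
noncomputable def finalAvg {d k : ℕ} (lam : Fin d → ℝ) (a : Fin k → ℝ) (j r : ℕ) : ℝ :=
  ((∑ i : Fin k, if j ≤ (i : ℕ) then a i else 0) +
      (∑ i : Fin d, if j ≤ (i : ℕ) ∧ (i : ℕ) < r then lam i else 0)) / ((r : ℝ) - (j : ℝ))

/-- Initial averages: `initAvg lam a lo hi = P_{lo+1,hi}` (1-based), i.e. the average of
`h_i = λ_i + a_i` over the (0-based) index window `[lo, hi)`. -/
noncomputable def initAvg {d k : ℕ} (lam : Fin d → ℝ) (a : Fin k → ℝ) (lo hi : ℕ) : ℝ :=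
  ((∑ i : Fin d, if lo ≤ (i : ℕ) ∧ (i : ℕ) < hi then lam i else 0) +
      (∑ i : Fin k, if lo ≤ (i : ℕ) ∧ (i : ℕ) < hi then a i else 0)) / ((hi : ℝ) - (lo : ℝ))

/-- 1-based access to a vector indexed by `Fin d`. -/
noncomputable def get1 {d : ℕ} (lam : Fin d → ℝ) (i : ℕ) : ℝ :=
  if h : i - 1 < d then lam ⟨i - 1, h⟩ else 0

/-- The index `s` is feasible for the pair `(λ, a)`: the unique vector
`ν_s = (c·1_{r-s}, λ_{r+1},…,λ_d)` determined by the truncated data satisfies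
`a^s ≺ ν_s - λ^s`. -/
def FeasibleIdx {d k : ℕ} (lam : Fin d → ℝ) (a : Fin k → ℝ) (s : ℕ) : Prop :=
  ∃ r : ℕ, ∃ c : ℝ, s < r ∧ r ≤ d ∧ 0 < c ∧
    (∀ i : Fin d, s ≤ (i : ℕ) → (i : ℕ) < r → lam i ≤ c) ∧
    (∀ hrd : r < d, c ≤ lam ⟨r, hrd⟩) ∧
    ((r : ℝ) - (s : ℝ)) * c =
      (∑ i : Fin d, if s ≤ (i : ℕ) ∧ (i : ℕ) < r then lam i else 0) +
        (∑ i : Fin k, if s ≤ (i : ℕ) then a i else 0) ∧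
    MajorizedByPad (fun i : Fin (k - s) => a ⟨s + (i : ℕ), by have := i.isLt; omega⟩)
      (fun i : Fin (d - s) =>
        if s + (i : ℕ) < r then c - lam ⟨s + (i : ℕ), by have := i.isLt; omega⟩ else 0)

/-!
Among the unitary conjugates of a Hermitian matrix `B`, one that minimises `re tr(A * B)` commutes
with `A`: differentiating along `exp(tK) B exp(-tK)` for the skew-Hermitian `K = ⁅A, B⁆` gives
`tr(Kᴴ * K) = 0`. Diagonalising `A` and the minimiser together turns the minimum into a sum
`∑ α i * β (σ i)` over the eigenvalues, so the rearrangement inequality yields von Neumann's bound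
`∑ α i * β i ≤ re tr(A * B)` for oppositely ordered `α` and `β`. If `A + B` has eigenvalues `α + β`,
then comparing `tr((A + B)²)` with `∑ (α i + β i)²` shows that this bound is an equality. So `B` is
itself a minimiser, `A` and `B` commute, and equality in the rearrangement inequality means that
their common eigenbasis can be ordered so that it pairs `α i` with `β i`.
-/

theorem exists_perm_comp_eq_of_map_univ_eq {ι R : Type*} [Fintype ι] {f g : ι → R}
    (h : univ.val.map f = univ.val.map g) : ∃ σ : Equiv.Perm ι, g ∘ σ = f := by
  classical
  have hfiber (r : R) : Nonempty ({i // f i = r} ≃ {i // g i = r}) := by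
    have hcount := congrArg (Multiset.count r) h
    rw [Multiset.count_map, Multiset.count_map] at hcount
    rw [← Fintype.card_eq, Fintype.card_subtype, Fintype.card_subtype]
    simpa [eq_comm, Finset.card, Finset.filter] using hcount
  exact ⟨Equiv.ofFiberEquiv fun r => (hfiber r).some, funext (Equiv.ofFiberEquiv_map _)⟩

section Antivary

variable {ι R S : Type*} [Finite ι] [LinearOrder R] [LinearOrder S] {f : ι → R} {g : ι → S}

theorem exists_equiv_fin_monotone_antitone_of_antivary (h : Antivary f g) :
    ∃ e : Fin (Nat.card ι) ≃ ι, Monotone (f ∘ e) ∧ Antitone (g ∘ e) := by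
  obtain ⟨_, hf, hg⟩ := antivary_iff_exists_monotone_antitone.mp h
  have := Fintype.ofFinite ι
  let e := Fintype.orderIsoFinOfCardEq ι Fintype.card_eq_nat_card
  exact ⟨e.toEquiv, hf.comp e.monotone, hg.comp_monotone e.monotone⟩

theorem exists_perm_comp_eq_of_antivary {σ : Equiv.Perm ι} (h : Antivary f g)
    (hσ : Antivary f (g ∘ σ)) :
    ∃ π : Equiv.Perm ι, f ∘ π = f ∧ g ∘ σ ∘ π = g := by
  obtain ⟨e, hfe, hge⟩ := exists_equiv_fin_monotone_antitone_of_antivary h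
  obtain ⟨e', hfe', hge'⟩ := exists_equiv_fin_monotone_antitone_of_antivary hσ
  have hf : (f ∘ e) ∘ (e'.trans e.symm) = f ∘ e :=
    Tuple.unique_monotone (τ := 1) (by simpa [Function.comp_def] using hfe') hfe
  have hg : (g ∘ e) ∘ ((e'.trans σ).trans e.symm) = g ∘ e :=
    Tuple.unique_antitone (τ := 1) (by simpa [Function.comp_def] using hge') hge
  refine ⟨e.symm.trans e', funext fun i => ?_, funext fun i => ?_⟩
  · simpa using congrFun hf (e.symm i)
  · simpa using congrFun hg (e.symm i)

end Antivary

section SymmetricPair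

open Module.End

variable {𝕜 E : Type*} [RCLike 𝕜] [NormedAddCommGroup E] [InnerProductSpace 𝕜 E]

theorem ofReal_re_eq_of_isSymmetric_of_apply_eq_smul {T : E →ₗ[𝕜] E} (hT : T.IsSymmetric) {c : 𝕜}
    {v : E} (hv : v ≠ 0) (hTv : T v = c • v) : ((RCLike.re c : ℝ) : 𝕜) = c :=
  RCLike.conj_eq_iff_re.mp <| hT.conj_eigenvalue_eq_self <|
    hasEigenvalue_of_hasEigenvector ⟨mem_eigenspace_iff.mpr hTv, hv⟩

theorem exists_orthonormalBasis_apply_eq_smul_of_commute [FiniteDimensional 𝕜 E]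
    {S T : E →ₗ[𝕜] E} (hS : S.IsSymmetric) (hT : T.IsSymmetric) (hST : Commute S T) :
    ∃ (b : OrthonormalBasis (Fin (Module.finrank 𝕜 E)) 𝕜 E) (α β : Fin (Module.finrank 𝕜 E) → ℝ),
      ∀ i, S (b i) = (α i : 𝕜) • b i ∧ T (b i) = (β i : 𝕜) • b i := by
  classical
  let V (μ : 𝕜 × 𝕜) : Submodule 𝕜 E := eigenspace S μ.2 ⊓ eigenspace T μ.1
  have hV : DirectSum.IsInternal V := hS.directSum_isInternal_of_commute hT hST
  have horth : OrthogonalFamily 𝕜 (fun μ : {μ // V μ ≠ ⊥} => V μ) fun μ => (V μ).subtypeₗᵢ :=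
    (LinearMap.IsSymmetric.orthogonalFamily_eigenspace_inf_eigenspace hS hT).comp
      Subtype.val_injective
  have : Fintype {μ // V μ ≠ ⊥} :=
    (WellFoundedGT.finite_ne_bot_of_iSupIndep hV.submodule_iSupIndep).fintype
  have hV' := DirectSum.isInternal_ne_bot_iff.mpr hV
  let b := hV'.subordinateOrthonormalBasis rfl horth
  let μ i : {μ // V μ ≠ ⊥} := hV'.subordinateOrthonormalBasisIndex rfl i horth
  have hb i : b i ∈ V (μ i) := hV'.subordinateOrthonormalBasis_subordinate rfl i horth
  have hSb i : S (b i) = (μ i).1.2 • b i := mem_eigenspace_iff.mp (hb i).1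
  have hTb i : T (b i) = (μ i).1.1 • b i := mem_eigenspace_iff.mp (hb i).2
  have hne i : b i ≠ 0 := b.orthonormal.ne_zero i
  refine ⟨b, fun i => RCLike.re (μ i).1.2, fun i => RCLike.re (μ i).1.1, fun i => ⟨?_, ?_⟩⟩
  · rw [ofReal_re_eq_of_isSymmetric_of_apply_eq_smul hS (hne i) (hSb i), hSb]
  · rw [ofReal_re_eq_of_isSymmetric_of_apply_eq_smul hT (hne i) (hTb i), hTb]

end SymmetricPair

section StationaryConjugate

open NormedSpace

variable {𝔸 : Type*} [NormedRing 𝔸] [NormedAlgebra ℝ 𝔸] [CompleteSpace 𝔸] [StarRing 𝔸]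
  [ContinuousStar 𝔸] [StarModule ℝ 𝔸]

theorem hasDerivAt_exp_smul_mul_mul_star (k x : 𝔸) :
    HasDerivAt (fun t : ℝ => exp (t • k) * x * star (exp (t • k))) (k * x + x * star k) 0 := by
  have hexp : HasDerivAt (fun t : ℝ => exp (t • k)) k 0 := by
    simpa using hasDerivAt_exp_smul_const (𝕂 := ℝ) k 0
  simpa using! (hexp.mul_const x).mul hexp.star

theorem map_lie_eq_zero_of_forall_le_map_conj (φ : 𝔸 →L[ℝ] ℝ) {x : 𝔸}
    (hmin : ∀ u ∈ unitary 𝔸, φ x ≤ φ (u * x * star u)) {k : 𝔸} (hk : k ∈ skewAdjoint 𝔸) :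
    φ ⁅k, x⁆ = 0 := by
  let : NormedAlgebra ℚ 𝔸 := .restrictScalars ℚ ℝ 𝔸
  have hexp (t : ℝ) : exp (t • k) ∈ unitary 𝔸 :=
    exp_mem_unitary_of_mem_skewAdjoint (skewAdjoint.smul_mem t hk)
  have hlie : k * x + x * star k = ⁅k, x⁆ := by
    rw [skewAdjoint.mem_iff.mp hk, mul_neg, ← sub_eq_add_neg, Ring.lie_def]
  rw [← hlie]
  refine IsLocalMin.hasDerivAt_eq_zero (.of_forall fun t => ?_)
    (φ.hasFDerivAt.comp_hasDerivAt 0 (hasDerivAt_exp_smul_mul_mul_star k x))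
  simpa using hmin _ (hexp t)

end StationaryConjugate

section TraceMinimum

open Matrix Unitary

variable {n 𝕜 : Type*} [Fintype n] [DecidableEq n] [RCLike 𝕜]

theorem isCompact_unitaryGroup : IsCompact (unitaryGroup n 𝕜 : Set (Matrix n n 𝕜)) := by
  have hbox : IsCompact {U : Matrix n n 𝕜 | ∀ i j, U i j ∈ Metric.closedBall 0 1} :=
    isCompact_pi_infinite fun _ => isCompact_pi_infinite fun _ => isCompact_closedBall 0 1
  refine hbox.of_isClosed_subset (isClosed_unitary (R := Matrix n n 𝕜)) fun U hU i j => ?_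
  simpa using entry_norm_bound_of_unitary hU i j

theorem exists_forall_re_trace_mul_conjStarAlgAut_le (A B : Matrix n n 𝕜) :
    ∃ U : unitaryGroup n 𝕜, ∀ V : unitaryGroup n 𝕜,
      RCLike.re (A * conjStarAlgAut 𝕜 _ U B).trace ≤
        RCLike.re (A * conjStarAlgAut 𝕜 _ V B).trace := by
  have hcont : Continuous fun U : Matrix n n 𝕜 => RCLike.re (A * (U * B * star U)).trace := by
    fun_prop
  obtain ⟨U, hU, hmin⟩ := isCompact_unitaryGroup.exists_isMinOn ⟨1, one_mem _⟩ hcont.continuousOn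
  exact ⟨⟨U, hU⟩, fun V => by simpa using! hmin V.2⟩

open scoped Matrix.Norms.Frobenius in
theorem re_trace_mul_lie_eq_zero {A B K : Matrix n n 𝕜}
    (hmin : ∀ U : unitaryGroup n 𝕜,
      RCLike.re (A * B).trace ≤ RCLike.re (A * conjStarAlgAut 𝕜 _ U B).trace)
    (hK : K ∈ skewAdjoint (Matrix n n 𝕜)) :
    RCLike.re (A * ⁅K, B⁆).trace = 0 := by
  let φ : Matrix n n 𝕜 →ₗ[ℝ] ℝ :=
    RCLike.reLm ∘ₗ traceLinearMap n ℝ 𝕜 ∘ₗ LinearMap.mulLeft ℝ A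
  exact map_lie_eq_zero_of_forall_le_map_conj (LinearMap.toContinuousLinearMap φ)
    (fun U hU => by simpa using! hmin ⟨U, hU⟩) hK

theorem commute_of_forall_re_trace_mul_le {A B : Matrix n n 𝕜} (hA : A.IsHermitian)
    (hB : B.IsHermitian)
    (hmin : ∀ U : unitaryGroup n 𝕜,
      RCLike.re (A * B).trace ≤ RCLike.re (A * conjStarAlgAut 𝕜 _ U B).trace) :
    Commute A B := by
  let K := ⁅A, B⁆
  have hK : star K = -K := by
    simp [K, Ring.lie_def, star_eq_conjTranspose, hA.eq, hB.eq]
  have htrace : (A * ⁅K, B⁆).trace = (Kᴴ * K).trace := by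
    calc (A * ⁅K, B⁆).trace = (-K * K).trace := by
          rw [Ring.lie_def, mul_sub, trace_sub, ← mul_assoc, ← mul_assoc, trace_mul_cycle,
            ← trace_sub, ← sub_mul]
          simp only [K, Ring.lie_def, neg_sub]
      _ = (Kᴴ * K).trace := by rw [← hK, star_eq_conjTranspose]
  have hre : RCLike.re (Kᴴ * K).trace = 0 := by
    rw [← htrace]
    exact re_trace_mul_lie_eq_zero hmin (skewAdjoint.mem_iff.mpr hK)
  have him : RCLike.im (Kᴴ * K).trace = 0 :=
    (RCLike.nonneg_iff.mp (posSemidef_conjTranspose_mul_self K).trace_nonneg).2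
  have hzero : (Kᴴ * K).trace = 0 := RCLike.ext (by simpa using hre) (by simpa using him)
  exact commute_iff_lie_eq.mpr (trace_conjTranspose_mul_self_eq_zero_iff.mp hzero)

end TraceMinimum

section SpectralMatrix

open Matrix Unitary

variable {n 𝕜 : Type*} [Fintype n] [DecidableEq n] [RCLike 𝕜]

/-- The Hermitian matrix `U diag(α) U*` with eigenvalues `α i` and eigenvectors the columns of the
unitary matrix `U`. -/
noncomputable def spectralMatrix (U : unitaryGroup n 𝕜) (α : n → ℝ) : Matrix n n 𝕜 :=
  conjStarAlgAut 𝕜 _ U (diagonal (RCLike.ofReal ∘ α))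

theorem spectralMatrix_add (U : unitaryGroup n 𝕜) (α β : n → ℝ) :
    spectralMatrix U (α + β) = spectralMatrix U α + spectralMatrix U β := by
  rw [spectralMatrix, spectralMatrix, spectralMatrix, ← map_add, diagonal_add]
  congr 2
  ext i
  simp

theorem isHermitian_spectralMatrix (U : unitaryGroup n 𝕜) (α : n → ℝ) :
    (spectralMatrix U α).IsHermitian := by
  have hdiag : (diagonal (RCLike.ofReal ∘ α) : Matrix n n 𝕜).IsHermitian :=
    isHermitian_diagonal_of_self_adjoint _ <| by ext; simp
  rw [IsHermitian, ← star_eq_conjTranspose, spectralMatrix, ← map_star, star_eq_conjTranspose,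
    hdiag.eq]

theorem conjStarAlgAut_spectralMatrix (W U : unitaryGroup n 𝕜) (α : n → ℝ) :
    conjStarAlgAut 𝕜 _ W (spectralMatrix U α) = spectralMatrix (W * U) α :=
  (conjStarAlgAut_mul_apply W U _).symm

theorem spectralMatrix_eq_sum (U : unitaryGroup n 𝕜) (α : n → ℝ) :
    spectralMatrix U α =
      ∑ i, (α i : 𝕜) • vecMulVec ((U : Matrix n n 𝕜).col i) (star ((U : Matrix n n 𝕜).col i)) := by
  ext x y
  rw [spectralMatrix, conjStarAlgAut_apply, mul_apply, Matrix.sum_apply]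
  simp [mul_diagonal, vecMulVec_apply, mul_left_comm, mul_assoc]

theorem eq_spectralMatrix_iff {A : Matrix n n 𝕜} {U : unitaryGroup n 𝕜} {α : n → ℝ} :
    A = spectralMatrix U α ↔
      ∀ i, A *ᵥ (U : Matrix n n 𝕜).col i = (α i : 𝕜) • (U : Matrix n n 𝕜).col i := by
  have hmul : A = spectralMatrix U α ↔
      A * (U : Matrix n n 𝕜) = (U : Matrix n n 𝕜) * diagonal (RCLike.ofReal ∘ α) := by
    rw [spectralMatrix, conjStarAlgAut_apply]
    constructor <;> intro h
    · rw [h, mul_assoc, coe_star_mul_self, mul_one]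
    · rw [← h, mul_assoc, mul_star_self_of_mem U.2, mul_one]
  rw [hmul, ← Matrix.ext_iff, forall_comm]
  refine forall_congr' fun i => (forall_congr' fun x => ?_).trans funext_iff.symm
  rw [mul_apply, mul_diagonal]
  simp [mulVec, dotProduct, mul_comm]

theorem sum_star_col_mul_col (U : unitaryGroup n 𝕜) (i j : n) :
    ∑ x, star ((U : Matrix n n 𝕜).col i x) * (U : Matrix n n 𝕜).col j x =
      if i = j then 1 else 0 := by
  simpa [mul_apply, star_apply, one_apply] using congrFun₂ (coe_star_mul_self U) i j

theorem trace_spectralMatrix_mul_spectralMatrix (U : unitaryGroup n 𝕜) (α β : n → ℝ) :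
    (spectralMatrix U α * spectralMatrix U β).trace = ((∑ i, α i * β i : ℝ) : 𝕜) := by
  rw [spectralMatrix, spectralMatrix, ← map_mul, conjStarAlgAut_apply, trace_mul_cycle]
  simp [diagonal_mul_diagonal, trace_diagonal]

theorem exists_forall_spectralMatrix_comp_perm_eq (U : unitaryGroup n 𝕜) (σ : Equiv.Perm n) :
    ∃ V : unitaryGroup n 𝕜, ∀ α : n → ℝ, spectralMatrix V (α ∘ σ) = spectralMatrix U α := by
  have hstar : star ((U : Matrix n n 𝕜).submatrix id σ) =
      (star (U : Matrix n n 𝕜)).submatrix σ id := conjTranspose_submatrix _ _ _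
  refine ⟨⟨(U : Matrix n n 𝕜).submatrix id σ, ?_⟩, fun α => ?_⟩
  · rw [mem_unitaryGroup_iff, hstar, submatrix_mul_equiv, mul_star_self_of_mem U.2,
      submatrix_id_id]
  · have hdiag : (diagonal (RCLike.ofReal ∘ α ∘ σ) : Matrix n n 𝕜) =
        (diagonal (RCLike.ofReal ∘ α)).submatrix σ σ :=
      (submatrix_diagonal_equiv (RCLike.ofReal ∘ α) σ).symm
    simp only [spectralMatrix, conjStarAlgAut_apply, hdiag, hstar, submatrix_mul_equiv,
      submatrix_id_id]

theorem exists_eq_spectralMatrix_eigenvalues_comp {A : Matrix n n 𝕜} (hA : A.IsHermitian)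
    (σ : Equiv.Perm n) :
    ∃ U : unitaryGroup n 𝕜, A = spectralMatrix U (hA.eigenvalues ∘ σ) := by
  obtain ⟨U, hU⟩ := exists_forall_spectralMatrix_comp_perm_eq hA.eigenvectorUnitary σ
  exact ⟨U, hA.spectral_theorem.trans (hU hA.eigenvalues).symm⟩

theorem roots_charpoly_spectralMatrix (U : unitaryGroup n 𝕜) (α : n → ℝ) :
    (spectralMatrix U α).charpoly.roots = univ.val.map (RCLike.ofReal ∘ α) := by
  rw [spectralMatrix, conjStarAlgAut_apply, charpoly_mul_comm, ← mul_assoc, coe_star_mul_self,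
    one_mul, charpoly_diagonal, Polynomial.roots_prod]
  · simp
  · simp [Finset.prod_ne_zero_iff, Polynomial.X_sub_C_ne_zero]

theorem exists_perm_comp_eq_of_spectralMatrix_eq {U V : unitaryGroup n 𝕜} {α β : n → ℝ}
    (h : spectralMatrix U α = spectralMatrix V β) : ∃ σ : Equiv.Perm n, β ∘ σ = α := by
  obtain ⟨σ, hσ⟩ := exists_perm_comp_eq_of_map_univ_eq <|
    (roots_charpoly_spectralMatrix U α).symm.trans
      ((congrArg (·.charpoly.roots) h).trans (roots_charpoly_spectralMatrix V β))
  exact ⟨σ, funext fun i => RCLike.ofReal_injective (congrFun hσ i)⟩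

theorem exists_eq_spectralMatrix_of_commute {A B : Matrix n n 𝕜} (hA : A.IsHermitian)
    (hB : B.IsHermitian) (hAB : Commute A B) :
    ∃ (U : unitaryGroup n 𝕜) (α β : n → ℝ), A = spectralMatrix U α ∧ B = spectralMatrix U β := by
  have hlin : Commute (toEuclideanLin A) (toEuclideanLin B) := by
    ext x : 1
    simp [toLpLin_apply, hAB.eq]
  obtain ⟨b, α, β, hb⟩ := exists_orthonormalBasis_apply_eq_smul_of_commute
    (isSymmetric_toEuclideanLin_iff.mpr hA) (isSymmetric_toEuclideanLin_iff.mpr hB) hlin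
  let e : Fin (Module.finrank 𝕜 (EuclideanSpace 𝕜 n)) ≃ n :=
    Fintype.equivOfCardEq (by simp)
  let U : unitaryGroup n 𝕜 :=
    ⟨(EuclideanSpace.basisFun n 𝕜).toBasis.toMatrix (b.reindex e),
      (EuclideanSpace.basisFun n 𝕜).toMatrix_orthonormalBasis_mem_unitary (b.reindex e)⟩
  have hcol i : (U : Matrix n n 𝕜).col i = (b (e.symm i)).ofLp := by
    ext x
    simp [U, Module.Basis.toMatrix_apply]
  refine ⟨U, α ∘ e.symm, β ∘ e.symm, ?_, ?_⟩ <;>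
    refine eq_spectralMatrix_iff.mpr fun i => ?_ <;> rw [hcol]
  · exact congrArg WithLp.ofLp (hb (e.symm i)).1
  · exact congrArg WithLp.ofLp (hb (e.symm i)).2

theorem exists_eq_spectralMatrix_comp_perm_of_commute {U V : unitaryGroup n 𝕜} {α β : n → ℝ}
    (h : Commute (spectralMatrix U α) (spectralMatrix V β)) :
    ∃ (W : unitaryGroup n 𝕜) (σ : Equiv.Perm n),
      spectralMatrix U α = spectralMatrix W α ∧ spectralMatrix V β = spectralMatrix W (β ∘ σ) := by
  obtain ⟨T, α', β', hα', hβ'⟩ := exists_eq_spectralMatrix_of_commute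
    (isHermitian_spectralMatrix U α) (isHermitian_spectralMatrix V β) h
  obtain ⟨ρ, rfl⟩ := exists_perm_comp_eq_of_spectralMatrix_eq hα'
  obtain ⟨τ, rfl⟩ := exists_perm_comp_eq_of_spectralMatrix_eq hβ'.symm
  obtain ⟨W, hW⟩ := exists_forall_spectralMatrix_comp_perm_eq T ρ
  exact ⟨W, ρ.trans τ, hα'.trans (hW α').symm, hβ'.trans (hW (β ∘ τ)).symm⟩

end SpectralMatrix

section VonNeumannTrace

open Matrix Unitary

variable {n 𝕜 : Type*} [Fintype n] [DecidableEq n] [RCLike 𝕜] {α β : n → ℝ}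

theorem sum_mul_le_re_trace_spectralMatrix_mul (h : Antivary α β) (U V : unitaryGroup n 𝕜) :
    ∑ i, α i * β i ≤ RCLike.re (spectralMatrix U α * spectralMatrix V β).trace := by
  obtain ⟨T, hT⟩ :=
    exists_forall_re_trace_mul_conjStarAlgAut_le (spectralMatrix U α) (spectralMatrix V β)
  simp only [conjStarAlgAut_spectralMatrix] at hT
  have hcomm : Commute (spectralMatrix U α) (spectralMatrix (T * V) β) :=
    commute_of_forall_re_trace_mul_le (isHermitian_spectralMatrix _ _)
      (isHermitian_spectralMatrix _ _) fun S => by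
        simpa only [conjStarAlgAut_spectralMatrix, mul_assoc] using hT (S * T)
  obtain ⟨W, σ, hα, hβ⟩ := exists_eq_spectralMatrix_comp_perm_of_commute hcomm
  calc ∑ i, α i * β i ≤ ∑ i, α i * β (σ i) := h.sum_mul_le_sum_mul_comp_perm
    _ = RCLike.re (spectralMatrix U α * spectralMatrix (T * V) β).trace := by
      rw [hα, hβ, trace_spectralMatrix_mul_spectralMatrix, RCLike.ofReal_re]
      rfl
    _ ≤ RCLike.re (spectralMatrix U α * spectralMatrix V β).trace := by
      simpa only [one_mul] using hT 1

theorem exists_common_spectralMatrix_of_re_trace_eq (h : Antivary α β) {U V : unitaryGroup n 𝕜}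
    (htrace : RCLike.re (spectralMatrix U α * spectralMatrix V β).trace = ∑ i, α i * β i) :
    ∃ W : unitaryGroup n 𝕜,
      spectralMatrix U α = spectralMatrix W α ∧ spectralMatrix V β = spectralMatrix W β := by
  have hcomm : Commute (spectralMatrix U α) (spectralMatrix V β) :=
    commute_of_forall_re_trace_mul_le (isHermitian_spectralMatrix _ _)
      (isHermitian_spectralMatrix _ _) fun S => by
        rw [htrace, conjStarAlgAut_spectralMatrix]
        exact sum_mul_le_re_trace_spectralMatrix_mul h U (S * V)
  obtain ⟨W, σ, hα, hβ⟩ := exists_eq_spectralMatrix_comp_perm_of_commute hcomm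
  have hsum : ∑ i, α i * β (σ i) = ∑ i, α i * β i := by
    rw [← htrace, hα, hβ, trace_spectralMatrix_mul_spectralMatrix, RCLike.ofReal_re]
    rfl
  obtain ⟨π, hαπ, hβπ⟩ :=
    exists_perm_comp_eq_of_antivary h (h.sum_mul_eq_sum_mul_comp_perm_iff.mp hsum)
  obtain ⟨W', hW'⟩ := exists_forall_spectralMatrix_comp_perm_eq W π
  refine ⟨W', ?_, ?_⟩
  · rw [hα, ← hW', hαπ]
  · rw [hβ, ← hW', Function.comp_assoc, hβπ]

theorem re_trace_mul_eq_of_add_eq_spectralMatrix_add {U V Z : unitaryGroup n 𝕜}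
    (hadd : spectralMatrix U α + spectralMatrix V β = spectralMatrix Z (α + β)) :
    RCLike.re (spectralMatrix U α * spectralMatrix V β).trace = ∑ i, α i * β i := by
  have htraceSq : ((spectralMatrix U α + spectralMatrix V β) *
      (spectralMatrix U α + spectralMatrix V β)).trace =
        ((∑ i, (α + β) i * (α + β) i : ℝ) : 𝕜) := by
    rw [hadd, trace_spectralMatrix_mul_spectralMatrix]
  rw [add_mul, mul_add, mul_add, trace_add, trace_add, trace_add,
    trace_mul_comm (spectralMatrix V β) (spectralMatrix U α),
    trace_spectralMatrix_mul_spectralMatrix, trace_spectralMatrix_mul_spectralMatrix] at htraceSq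
  have hre := congrArg RCLike.re htraceSq
  simp only [map_add, RCLike.ofReal_re, Pi.add_apply, add_mul, mul_add, sum_add_distrib,
    mul_comm (β _) (α _)] at hre
  linarith

theorem exists_common_spectralMatrix_of_add_eq (h : Antivary α β) {U V Z : unitaryGroup n 𝕜}
    (hadd : spectralMatrix U α + spectralMatrix V β = spectralMatrix Z (α + β)) :
    ∃ W : unitaryGroup n 𝕜,
      spectralMatrix U α = spectralMatrix W α ∧ spectralMatrix V β = spectralMatrix W β :=
  exists_common_spectralMatrix_of_re_trace_eq h (re_trace_mul_eq_of_add_eq_spectralMatrix_add hadd)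

end VonNeumannTrace

section FrameOperators

open Matrix

variable {d : ℕ}

theorem monotone_eigsAsc (A : Matrix (Fin d) (Fin d) ℂ) : Monotone (eigsAsc A) := by
  unfold eigsAsc
  split
  · exact Tuple.monotone_sort _
  · exact monotone_const

theorem antitone_eigsDesc (A : Matrix (Fin d) (Fin d) ℂ) : Antitone (eigsDesc A) := by
  unfold eigsDesc
  split
  · exact (Tuple.monotone_sort _).comp_antitone Fin.rev_anti
  · exact antitone_const

theorem exists_perm_sortDesc_eq (x : Fin d → ℝ) : ∃ σ : Equiv.Perm (Fin d), sortDesc x = x ∘ σ :=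
  ⟨Fin.revPerm.trans (Tuple.sort x), rfl⟩

theorem exists_eq_spectralMatrix_eigsAsc {A : Matrix (Fin d) (Fin d) ℂ} (hA : A.IsHermitian) :
    ∃ U : unitaryGroup (Fin d) ℂ, A = spectralMatrix U (eigsAsc A) := by
  simpa only [eigsAsc, dif_pos hA, sortAsc] using exists_eq_spectralMatrix_eigenvalues_comp hA _

theorem exists_eq_spectralMatrix_eigsDesc {A : Matrix (Fin d) (Fin d) ℂ} (hA : A.IsHermitian) :
    ∃ U : unitaryGroup (Fin d) ℂ, A = spectralMatrix U (eigsDesc A) := by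
  obtain ⟨σ, hσ⟩ := exists_perm_sortDesc_eq hA.eigenvalues
  simpa only [eigsDesc, dif_pos hA, hσ] using exists_eq_spectralMatrix_eigenvalues_comp hA σ

theorem exists_eq_spectralMatrix_of_eigsDesc_eq {A : Matrix (Fin d) (Fin d) ℂ} (hA : A.IsHermitian)
    {x : Fin d → ℝ} (hx : eigsDesc A = sortDesc x) :
    ∃ U : unitaryGroup (Fin d) ℂ, A = spectralMatrix U x := by
  obtain ⟨V, hV⟩ := exists_eq_spectralMatrix_eigsDesc hA
  obtain ⟨σ, hσ⟩ := exists_perm_sortDesc_eq x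
  obtain ⟨U, hU⟩ := exists_forall_spectralMatrix_comp_perm_eq V σ.symm
  refine ⟨U, hV.trans ?_⟩
  rw [← hU, hx, hσ, Function.comp_assoc, Equiv.self_comp_symm, Function.comp_id]

theorem isHermitian_frameOp {n : ℕ} (F : Fin n → Fin d → ℂ) : (frameOp F).IsHermitian :=
  isSelfAdjoint_sum _ fun l _ => (posSemidef_vecMulVec_self_star (F l)).isHermitian

end FrameOperators

theorem stmt_4_general {d : ℕ} {A B : Matrix (Fin d) (Fin d) ℂ} (hA : A.IsHermitian)
    (hB : B.IsHermitian)
    (hop : eigsDesc (A + B) = sortDesc (fun i => eigsAsc A i + eigsDesc B i)) :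
    ∃ v : Fin d → Fin d → ℂ,
      (∀ i j, ∑ x, (starRingEnd ℂ) (v i x) * v j x = if i = j then 1 else 0) ∧
      (∀ i, A.mulVec (v i) = (eigsAsc A i : ℂ) • v i) ∧
      B = ∑ i, (eigsDesc B i : ℂ) • Matrix.vecMulVec (v i) (star (v i)) ∧
      A + B = ∑ i, ((eigsAsc A i + eigsDesc B i : ℝ) : ℂ) •
        Matrix.vecMulVec (v i) (star (v i)) := by
  obtain ⟨U, hU⟩ := exists_eq_spectralMatrix_eigsAsc hA
  obtain ⟨V, hV⟩ := exists_eq_spectralMatrix_eigsDesc hB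
  obtain ⟨Z, hZ⟩ := exists_eq_spectralMatrix_of_eigsDesc_eq (hA.add hB) hop
  have hanti : Antivary (eigsAsc A) (eigsDesc B) :=
    (monotone_eigsAsc A).antivary (antitone_eigsDesc B)
  obtain ⟨W, hUW, hVW⟩ :=
    exists_common_spectralMatrix_of_add_eq hanti (Z := Z) (by rw [← hU, ← hV]; exact hZ)
  have hAW := hU.trans hUW
  have hBW := hV.trans hVW
  refine ⟨(W : Matrix (Fin d) (Fin d) ℂ).col, sum_star_col_mul_col W, eq_spectralMatrix_iff.mp hAW,
    hBW.trans (spectralMatrix_eq_sum _ _), ?_⟩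
  calc A + B = spectralMatrix W (eigsAsc A + eigsDesc B) := by
        rw [spectralMatrix_add, ← hAW, ← hBW]
    _ = _ := spectralMatrix_eq_sum _ _

theorem stmt_4 {d n₀ k : ℕ} (F₀ : Fin n₀ → Fin d → ℂ) (a : Fin k → ℝ)
    (ha_pos : ∀ i, 0 < a i) (ha_mono : Antitone a)
    (hk : d - (frameOp F₀).rank ≤ k)
    (G : Fin k → Fin d → ℂ) (hG : ∀ i, normSqVec (G i) = a i)
    (hop : eigsDesc (frameOp F₀ + frameOp G) =
      sortDesc (fun i => eigsAsc (frameOp F₀) i + eigsDesc (frameOp G) i)) :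
    ∃ v : Fin d → Fin d → ℂ,
      (∀ i j, ∑ x, (starRingEnd ℂ) (v i x) * v j x = if i = j then 1 else 0) ∧
      (∀ i, (frameOp F₀).mulVec (v i) = (eigsAsc (frameOp F₀) i : ℂ) • v i) ∧
      frameOp G = ∑ i, (eigsDesc (frameOp G) i : ℂ) • Matrix.vecMulVec (v i) (star (v i)) ∧
      frameOp F₀ + frameOp G =
        ∑ i, ((eigsAsc (frameOp F₀) i + eigsDesc (frameOp G) i : ℝ) : ℂ) •
          Matrix.vecMulVec (v i) (star (v i)) :=
  stmt_4_general (isHermitian_frameOp F₀) (isHermitian_frameOp G) hop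
end

section
/- Let (F_0, a) be initial data for the completion problem in ℂ^d with k ≥ d, let f : [0,∞) → [0,∞) be strictly convex, and let F = (F_0, G) ∈ C_a^op(F_0) be a global minimizer of P_f on C_a(F_0). Suppose that W = range(S_G) ≠ ℂ^d and that S_F restricted to W equals c·I_W for some c > 0. Set λ = λ↑(S_0), μ = λ(S_G) (decreasing), and s = dim W = max{i : μ_i ≠ 0}. Then λ_s < c ≤ λ_{s+1}; consequently λ + μ = (c·1_s, λ_{s+1},…,λ_d) is non-decreasing with λ_i ≤ (λ+μ)_i for every i, and a ≺ μ. -/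
open Finset
open scoped ComplexOrder

/-!
Let `S = S₀ + M Mᴴ` be the optimal operator, where `M` has the completing vectors as columns, so
that `S M = c M`. Suppose `S h = b h` for a unit vector `h` and some `b < c`; then `Mᴴ h = 0`. As
`rank M < k`, the columns of `M` satisfy a nontrivial linear relation, and its coefficients say how
to tilt the columns slightly towards `h`, keeping their norms, so that all cross terms between `M`
and `h` cancel in the new operator. The tilt thus replaces `S` by `S - B + τ h hᴴ`, where
`0 ≤ B ≤ M Mᴴ` has trace `τ`: a small amount of spectrum is moved strictly between the levels `c`
and `b`, and strict convexity lowers the potential. So a minimizer has `S ≥ c`.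

Now `S₀` commutes with `M Mᴴ`, and in a joint eigenbasis `S M Mᴴ = c M Mᴴ` together with `S ≥ c`
forces each eigenvalue `μ` of `M Mᴴ` to be `max (c - λ) 0`, where `λ` is the corresponding
eigenvalue of `S₀`. This is water-filling at level `c`, and the order relations can be read off it.
The majorization is the Schur inequality for the Gram matrix `Mᴴ M`, whose diagonal is `a` and whose
nonzero eigenvalues are those of `M Mᴴ`.
-/

section Sorting

variable {m : ℕ}

lemma sortDesc_antitone (x : Fin m → ℝ) : Antitone (sortDesc x) :=
  fun _ _ h => Tuple.monotone_sort x (Fin.rev_le_rev.mpr h)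

lemma sortAsc_eq_of_map_eq {x y : Fin m → ℝ}
    (h : (univ : Finset (Fin m)).val.map x = (univ : Finset (Fin m)).val.map y) :
    sortAsc x = sortAsc y := by
  rw [Fin.univ_val_map, Fin.univ_val_map, Multiset.coe_eq_coe] at h
  refine List.ofFn_injective (List.Perm.eq_of_sortedLE (Tuple.monotone_sort x).sortedLE_ofFn
    (Tuple.monotone_sort y).sortedLE_ofFn ?_)
  exact (Equiv.Perm.ofFn_comp_perm _ x).trans (h.trans (Equiv.Perm.ofFn_comp_perm _ y).symm)

lemma sum_comp_sortDesc (φ : ℝ → ℝ) (x : Fin m → ℝ) :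
    ∑ i, φ (sortDesc x i) = ∑ i, φ (x i) :=
  Equiv.sum_comp (Fin.revPerm.trans (Tuple.sort x)) fun i => φ (x i)

lemma sortDesc_comp_of_antitone {φ : ℝ → ℝ} (hφ : Antitone φ) (x : Fin m → ℝ) :
    sortDesc (φ ∘ x) = φ ∘ sortAsc x := by
  have hmono : Monotone ((φ ∘ x) ∘ (Fin.revPerm.trans (Tuple.sort x))) :=
    hφ.comp (sortDesc_antitone x)
  have hsort := Tuple.comp_sort_eq_comp_iff_monotone.mpr hmono
  ext i
  simpa [sortDesc, sortAsc] using (congrFun hsort i.rev).symm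

lemma sum_comp_pad {k : ℕ} {φ : ℝ → ℝ} (hφ : φ 0 = 0) (x : Fin k → ℝ) (hkm : k ≤ m) :
    ∑ i, φ (pad x m i) = ∑ i, φ (x i) := by
  obtain ⟨r, rfl⟩ := Nat.exists_eq_add_of_le hkm
  simp [Fin.sum_univ_add, pad, hφ]

end Sorting

section Majorization

variable {m : ℕ}

lemma sum_Iic_sortDesc_sub_le (x : Fin m → ℝ) (v : ℝ) (j : Fin m) :
    ∑ i ∈ Iic j, (sortDesc x i - v) ≤ ∑ i, max (x i - v) 0 :=
  calc ∑ i ∈ Iic j, (sortDesc x i - v)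
      ≤ ∑ i ∈ Iic j, max (sortDesc x i - v) 0 := sum_le_sum fun _ _ => le_max_left _ _
    _ ≤ ∑ i, max (sortDesc x i - v) 0 :=
        sum_le_sum_of_subset_of_nonneg (subset_univ _) fun _ _ _ => le_max_right _ _
    _ = ∑ i, max (x i - v) 0 := sum_comp_sortDesc (fun t => max (t - v) 0) x

lemma sum_Iic_sortDesc_sub_eq (x : Fin m → ℝ) (j : Fin m) :
    ∑ i ∈ Iic j, (sortDesc x i - sortDesc x j) = ∑ i, max (x i - sortDesc x j) 0 := by
  rw [← sum_comp_sortDesc (fun t => max (t - sortDesc x j) 0) x,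
    ← sum_subset (subset_univ (Iic j)) fun i _ hi => max_eq_right (sub_nonpos.mpr
      (sortDesc_antitone x (le_of_not_ge (mem_Iic.not.mp hi))))]
  exact sum_congr rfl fun i hi =>
    (max_eq_left (sub_nonneg.mpr (sortDesc_antitone x (mem_Iic.mp hi)))).symm

lemma majorizedBy_of_sum_max_sub_le {x y : Fin m → ℝ} (hsum : ∑ i, x i = ∑ i, y i)
    (hle : ∀ j, ∑ i, max (x i - y j) 0 ≤ ∑ i, max (y i - y j) 0) : MajorizedBy x y := by
  refine ⟨fun j => ?_, hsum⟩
  have hsub := calc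
    ∑ i ∈ Iic j, (sortDesc x i - sortDesc y j)
      ≤ ∑ i, max (x i - sortDesc y j) 0 := sum_Iic_sortDesc_sub_le x _ j
    _ ≤ ∑ i, max (y i - sortDesc y j) 0 := hle _
    _ = ∑ i ∈ Iic j, (sortDesc y i - sortDesc y j) := (sum_Iic_sortDesc_sub_eq y j).symm
  simpa only [sum_sub_distrib, sub_le_sub_iff_right] using hsub

lemma majorizedByPad_of_sum_max_sub_le {k d : ℕ} {x : Fin k → ℝ} {y : Fin d → ℝ}
    (hy : ∀ i, 0 ≤ y i) (hsum : ∑ i, x i = ∑ i, y i)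
    (hle : ∀ v, 0 ≤ v → ∑ i, max (x i - v) 0 ≤ ∑ i, max (y i - v) 0) :
    MajorizedByPad x y := by
  have hpad : ∀ j, 0 ≤ pad y (max k d) j := fun j => by
    unfold pad; split_ifs <;> simp [hy]
  refine majorizedBy_of_sum_max_sub_le ?_ fun j => ?_
  · simpa only [id] using (sum_comp_pad (φ := id) rfl x (le_max_left k d)).trans
      (hsum.trans (sum_comp_pad (φ := id) rfl y (le_max_right k d)).symm)
  · have hzero : max (0 - pad y (max k d) j) 0 = 0 := max_eq_right (by linarith [hpad j])
    rw [sum_comp_pad (φ := fun t => max (t - _) 0) hzero x (le_max_left k d),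
      sum_comp_pad (φ := fun t => max (t - _) 0) hzero y (le_max_right k d)]
    exact hle _ (hpad j)

end Majorization

section StrictConvex

lemma lt_chord_of_strictConvexOn {f : ℝ → ℝ} {b c p : ℝ} (hf : StrictConvexOn ℝ (Set.Icc b c) f)
    (hp : p ∈ Set.Ioo b c) : f p < f b + slope f b c * (p - b) := by
  have hbc := hp.1.trans hp.2
  have h := hf.slope_strict_mono_adjacent (Set.left_mem_Icc.mpr hbc.le)
    (Set.right_mem_Icc.mpr hbc.le) hp.1 hp.2
  have h1 := sub_pos.2 hp.1
  have h2 := sub_pos.2 hp.2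
  rw [div_lt_div_iff₀ h1 h2] at h
  rw [slope_def_field, div_mul_eq_mul_div, ← sub_lt_iff_lt_add', lt_div_iff₀ (by linarith)]
  linarith

lemma sum_comp_lt_sum_comp_of_contract {ι : Type*} [Fintype ι] {f : ℝ → ℝ} {b c : ℝ}
    (hf : StrictConvexOn ℝ (Set.Icc b c) f) {x y : ι → ℝ}
    (hxy : ∀ i, y i ≠ x i → (x i = b ∨ x i = c) ∧ y i ∈ Set.Ioo b c)
    (hsum : ∑ i, y i = ∑ i, x i) (hne : y ≠ x) : ∑ i, f (y i) < ∑ i, f (x i) := by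
  set m := slope f b c
  have hlt : ∀ i, y i ≠ x i → f (y i) - m * y i < f (x i) - m * x i := fun i hi => by
    obtain ⟨hx, hy⟩ := hxy i hi
    have hchord := lt_chord_of_strictConvexOn hf hy
    have hslope := sub_smul_slope f b c
    rw [smul_eq_mul, vsub_eq_sub] at hslope
    rcases hx with hx | hx <;> rw [hx] <;> linarith
  obtain ⟨j, hj⟩ := Function.ne_iff.mp hne
  have hshift : ∑ i, (f (y i) - m * y i) < ∑ i, (f (x i) - m * x i) := by
    refine sum_lt_sum (fun i _ => ?_) ⟨j, mem_univ j, hlt j hj⟩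
    by_cases hi : y i = x i
    · rw [hi]
    · exact (hlt i hi).le
  simpa only [sum_sub_distrib, ← mul_sum, hsum, sub_lt_sub_iff_right] using hshift

end StrictConvex

section SpectralHom

lemma exists_orthonormalBasis_of_pairwise_commute {ι n 𝕜 E : Type*} [Fintype n] [RCLike 𝕜]
    [NormedAddCommGroup E] [InnerProductSpace 𝕜 E] [FiniteDimensional 𝕜 E]
    (hn : Module.finrank 𝕜 E = Fintype.card n)
    {T : ι → E →ₗ[𝕜] E} (hT : ∀ i, (T i).IsSymmetric)
    (hcomm : Pairwise (Function.onFun Commute T)) :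
    ∃ (b : OrthonormalBasis n 𝕜 E) (x : ι → n → ℝ), ∀ i l, T i (b l) = (x i l : 𝕜) • b l := by
  classical
  let V (α : ι → 𝕜) : Submodule 𝕜 E := ⨅ i, Module.End.eigenspace (T i) (α i)
  have hV : DirectSum.IsInternal V :=
    LinearMap.IsSymmetric.directSum_isInternal_of_pairwise_commute hT hcomm
  have hfin : Finite {α // V α ≠ ⊥} :=
    WellFoundedGT.finite_ne_bot_of_iSupIndep hV.submodule_iSupIndep
  have := Fintype.ofFinite {α // V α ≠ ⊥}
  have hV' := DirectSum.isInternal_ne_bot_iff.mpr hV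
  have hortho := (LinearMap.IsSymmetric.orthogonalFamily_iInf_eigenspaces hT).comp
    (Subtype.val_injective (p := fun α => V α ≠ ⊥))
  let α (l : Fin (Fintype.card n)) : ι → 𝕜 :=
    (hV'.subordinateOrthonormalBasisIndex hn l hortho).1
  let b := hV'.subordinateOrthonormalBasis hn hortho
  have hb : ∀ i l, T i (b l) = α l i • b l := fun i l => Module.End.mem_eigenspace_iff.mp
    ((Submodule.mem_iInf _).mp (hV'.subordinateOrthonormalBasis_subordinate hn l hortho) i)
  have hreal : ∀ i l, (RCLike.re (α l i) : 𝕜) = α l i := fun i l =>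
    RCLike.conj_eq_iff_re.mp ((hT i).conj_eigenvalue_eq_self
      (Module.End.hasEigenvalue_of_hasEigenvector
        ⟨Module.End.mem_eigenspace_iff.mpr (hb i l), b.orthonormal.ne_zero l⟩))
  let e := (Fintype.equivFin n).symm
  refine ⟨b.reindex e, fun i l => RCLike.re (α (e.symm l) i), fun i l => ?_⟩
  rw [hreal, OrthonormalBasis.reindex_apply, hb]

open Matrix

variable {n 𝕜 : Type*} [Fintype n] [DecidableEq n] [RCLike 𝕜]

/-- The algebra homomorphism `x ↦ U diag(x) U*` attached to a unitary matrix `U`. Matrices that are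
simultaneously diagonalized by `U` are its values, so relations between them become pointwise
relations between their eigenvalue vectors. -/
noncomputable def spectralHom (U : unitaryGroup n 𝕜) : (n → ℝ) →ₐ[ℝ] Matrix n n 𝕜 :=
  (((Unitary.conjStarAlgAut ℝ (Matrix n n 𝕜) U).toAlgEquiv : Matrix n n 𝕜 →ₐ[ℝ] Matrix n n 𝕜).comp
    (diagonalAlgHom ℝ)).comp ((Algebra.ofId ℝ 𝕜).compLeft n)

lemma spectralHom_apply (U : unitaryGroup n 𝕜) (x : n → ℝ) :
    spectralHom U x = U * diagonal (fun i => (x i : 𝕜)) * star (U : Matrix n n 𝕜) :=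
  rfl

lemma spectralHom_injective (U : unitaryGroup n 𝕜) : Function.Injective (spectralHom U) := by
  intro x y h
  have hdiag := (Unitary.conjStarAlgAut ℝ (Matrix n n 𝕜) U).injective h
  exact funext fun i => RCLike.ofReal_injective (congrFun (diagonal_injective hdiag) i)

lemma isHermitian_spectralHom (U : unitaryGroup n 𝕜) (x : n → ℝ) :
    (spectralHom U x).IsHermitian := by
  rw [spectralHom_apply, star_eq_conjTranspose]
  refine isHermitian_mul_mul_conjTranspose _ (isHermitian_diagonal_of_self_adjoint _ ?_)
  exact funext fun i => RCLike.conj_ofReal (x i)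

lemma posSemidef_spectralHom_iff (U : unitaryGroup n 𝕜) {x : n → ℝ} :
    (spectralHom U x).PosSemidef ↔ 0 ≤ x := by
  have hU : IsUnit (U : Matrix n n 𝕜) := (Unitary.toUnits U).isUnit
  rw [spectralHom_apply, hU.posSemidef_star_right_conjugate_iff, posSemidef_diagonal_iff]
  simp only [RCLike.ofReal_nonneg, Pi.le_def, Pi.zero_apply]

lemma trace_spectralHom (U : unitaryGroup n 𝕜) (x : n → ℝ) :
    (spectralHom U x).trace = ((∑ i, x i : ℝ) : 𝕜) := by
  rw [spectralHom_apply, trace_mul_cycle, Unitary.coe_star_mul_self, one_mul, trace_diagonal,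
    RCLike.ofReal_sum]

lemma map_eigenvalues_spectralHom (U : unitaryGroup n 𝕜) (x : n → ℝ)
    (h : (spectralHom U x).IsHermitian) :
    (univ : Finset n).val.map h.eigenvalues = (univ : Finset n).val.map x := by
  have hchar : (spectralHom U x).charpoly =
      ((univ.val.map fun i => (x i : 𝕜)).map fun a => Polynomial.X - Polynomial.C a).prod := by
    rw [spectralHom_apply, charpoly_mul_comm, ← mul_assoc, Unitary.coe_star_mul_self, one_mul,
      charpoly_diagonal, Multiset.map_map]
    rfl
  refine Multiset.map_injective (RCLike.ofReal_injective (K := 𝕜)) ?_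
  rw [Multiset.map_map, Multiset.map_map, ← h.roots_charpoly_eq_eigenvalues, hchar,
    Polynomial.roots_multiset_prod_X_sub_C]
  rfl

lemma eq_spectralHom_of_mulVec {A : Matrix n n 𝕜} {x : n → ℝ}
    (b : OrthonormalBasis n 𝕜 (EuclideanSpace 𝕜 n))
    (hb : ∀ l, A *ᵥ (b l).ofLp = (x l : 𝕜) • (b l).ofLp) :
    A = spectralHom ⟨(EuclideanSpace.basisFun n 𝕜).toBasis.toMatrix b,
      (EuclideanSpace.basisFun n 𝕜).toMatrix_orthonormalBasis_mem_unitary b⟩ x := by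
  set U : unitaryGroup n 𝕜 := ⟨(EuclideanSpace.basisFun n 𝕜).toBasis.toMatrix b,
    (EuclideanSpace.basisFun n 𝕜).toMatrix_orthonormalBasis_mem_unitary b⟩
  have hAU : A * (U : Matrix n n 𝕜) = U * diagonal (fun l => (x l : 𝕜)) := by
    ext r l
    rw [mul_diagonal, mul_comm]
    exact congrFun (hb l) r
  rw [spectralHom_apply, ← hAU, mul_assoc, Unitary.mul_star_self_of_mem U.2, mul_one]

lemma exists_eq_spectralHom_of_commute {ι : Type*} {A : ι → Matrix n n 𝕜}
    (hA : ∀ i, (A i).IsHermitian) (hcomm : Pairwise (Function.onFun Commute A)) :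
    ∃ (U : unitaryGroup n 𝕜) (x : ι → n → ℝ), ∀ i, A i = spectralHom U (x i) := by
  have hlin : Pairwise (Function.onFun Commute fun i => (A i).toEuclideanLin) := fun i j hij => by
    ext1 v
    simp only [Module.End.mul_apply, toLpLin_apply, mulVec_mulVec, (hcomm hij).eq]
  obtain ⟨b, x, hb⟩ := exists_orthonormalBasis_of_pairwise_commute finrank_euclideanSpace
    (fun i => isSymmetric_toEuclideanLin_iff.mpr (hA i)) hlin
  exact ⟨_, x, fun i => eq_spectralHom_of_mulVec b fun l => congrArg WithLp.ofLp (hb i l)⟩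

end SpectralHom

section Eigenvalues

open Matrix

variable {d : ℕ}

lemma eigsAsc_monotone (S : Matrix (Fin d) (Fin d) ℂ) : Monotone (eigsAsc S) := by
  unfold eigsAsc
  split_ifs
  · exact Tuple.monotone_sort _
  · exact monotone_const

lemma sum_comp_eigsDesc {A : Matrix (Fin d) (Fin d) ℂ} (hA : A.IsHermitian) (φ : ℝ → ℝ) :
    ∑ i, φ (eigsDesc A i) = ∑ i, φ (hA.eigenvalues i) := by
  rw [eigsDesc, dif_pos hA, sum_comp_sortDesc]

lemma eigsDesc_nonneg {A : Matrix (Fin d) (Fin d) ℂ} (hA : A.PosSemidef) (i : Fin d) :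
    0 ≤ eigsDesc A i := by
  rw [eigsDesc, dif_pos hA.isHermitian]
  exact hA.eigenvalues_nonneg _

variable (U : unitaryGroup (Fin d) ℂ) (x : Fin d → ℝ)

lemma eigsAsc_spectralHom : eigsAsc (spectralHom U x) = sortAsc x := by
  rw [eigsAsc, dif_pos (isHermitian_spectralHom U x)]
  exact sortAsc_eq_of_map_eq (map_eigenvalues_spectralHom U x _)

lemma eigsDesc_spectralHom : eigsDesc (spectralHom U x) = sortDesc x := by
  rw [eigsDesc, dif_pos (isHermitian_spectralHom U x)]
  exact funext fun i =>
    congrFun (sortAsc_eq_of_map_eq (map_eigenvalues_spectralHom U x _)) i.rev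

lemma potential_spectralHom (f : ℝ → ℝ) : potential f (spectralHom U x) = ∑ i, f (x i) := by
  rw [potential, eigsDesc_spectralHom, sum_comp_sortDesc]

end Eigenvalues

section Spreading

open Matrix

variable {n 𝕜 : Type*} [Fintype n] [RCLike 𝕜]

lemma commute_of_isHermitian_of_mul_eq_smul {A B : Matrix n n 𝕜} {c : ℝ} (hA : A.IsHermitian)
    (hB : B.IsHermitian) (h : A * B = c • B) : Commute A B :=
  (hA.commute_iff hB).mpr (h ▸ hB.smul (IsSelfAdjoint.all c))

lemma mul_eq_zero_of_mul_eq_smul_of_mul_eq_smul {A B C : Matrix n n 𝕜} {b c : ℝ} (hbc : b ≠ c)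
    (hcomm : Commute A B) (hB : A * B = b • B) (hC : A * C = c • C) : B * C = 0 := by
  have hsmul : b • (B * C) = c • (B * C) := by
    rw [← smul_mul_assoc, ← hB, hcomm.eq, mul_assoc, hC, mul_smul_comm]
  exact (smul_eq_zero.mp (sub_smul b c (B * C) ▸ sub_eq_zero.mpr hsmul)).resolve_left
    (sub_ne_zero.mpr hbc)

lemma exists_eq_spectralHom_of_mul_eq_smul [DecidableEq n] {S B H : Matrix n n 𝕜} {b c : ℝ}
    (hS : S.IsHermitian) (hB : B.IsHermitian) (hH : H.IsHermitian) (hbc : b ≠ c)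
    (hSB : S * B = c • B) (hSH : S * H = b • H) :
    ∃ (U : unitaryGroup n 𝕜) (σ β η : n → ℝ), S = spectralHom U σ ∧ B = spectralHom U β ∧
      H = spectralHom U η := by
  have hSB' := commute_of_isHermitian_of_mul_eq_smul hS hB hSB
  have hSH' := commute_of_isHermitian_of_mul_eq_smul hS hH hSH
  have hBH : Commute B H := (hB.commute_iff hH).mpr <| by
    rw [mul_eq_zero_of_mul_eq_smul_of_mul_eq_smul hbc.symm hSB' hSB hSH]
    exact isHermitian_zero
  obtain ⟨U, x, hx⟩ := exists_eq_spectralHom_of_commute (A := ![S, B, H])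
    (by simp [Fin.forall_fin_succ, hS, hB, hH])
    (by simp [Pairwise, Fin.forall_fin_succ, Function.onFun, hSB', hSH', hBH, hSB'.symm,
      hSH'.symm, hBH.symm])
  exact ⟨U, x 0, x 1, x 2, hx 0, hx 1, hx 2⟩

lemma sum_comp_sub_add_lt {f : ℝ → ℝ} {b c : ℝ} (hf : StrictConvexOn ℝ (Set.Icc b c) f)
    {σ β η : n → ℝ} (hβ : 0 ≤ β) (hη : 0 ≤ η) (hσβ : σ * β = c • β) (hση : σ * η = b • η)
    (hsum : ∑ i, β i = ∑ i, η i) (hlt : ∑ i, β i < c - b) (hne : β ≠ 0) :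
    ∑ i, f ((σ - β + η) i) < ∑ i, f (σ i) := by
  have hmem : ∀ {γ : n → ℝ}, 0 ≤ γ → ∑ i, γ i = ∑ i, β i → ∀ i, γ i ≠ 0 →
      γ i ∈ Set.Ioo 0 (c - b) := fun hγ hγβ i hi =>
    ⟨(hγ i).lt_of_ne' hi,
      (single_le_sum (fun j _ => hγ j) (mem_univ i)).trans_lt (hγβ.trans_lt hlt)⟩
  have hc : ∀ i, β i ≠ 0 → σ i = c := fun i hi => mul_right_cancel₀ hi (congrFun hσβ i)
  have hb : ∀ i, η i ≠ 0 → σ i = b := fun i hi => mul_right_cancel₀ hi (congrFun hση i)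
  have hbc : b < c := sub_pos.mp ((sum_nonneg fun i _ => hβ i).trans_lt hlt)
  have hη0 : ∀ i, β i ≠ 0 → η i = 0 := fun i hi => by
    by_contra hηi
    exact hbc.ne ((hb i hηi).symm.trans (hc i hi))
  obtain ⟨j, hj⟩ := Function.ne_iff.mp hne
  refine sum_comp_lt_sum_comp_of_contract hf (fun i hi => ?_) ?_
    (Function.ne_iff.mpr ⟨j, by simpa [hη0 j hj] using hj⟩)
  · by_cases hβi : β i = 0
    · have hηi : η i ≠ 0 := fun h => hi (by simp [hβi, h])
      obtain ⟨hpos, hlt'⟩ := hmem hη hsum.symm i hηi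
      exact ⟨.inl (hb i hηi), by simpa [hβi, hb i hηi, hpos] using lt_sub_iff_add_lt'.mp hlt'⟩
    · obtain ⟨hpos, hlt'⟩ := hmem hβ rfl i hβi
      exact ⟨.inr (hc i hβi), by simpa [hη0 i hβi, hc i hβi, hpos] using lt_sub_comm.mp hlt'⟩
  · simp [sum_add_distrib, sum_sub_distrib, hsum]

lemma potential_sub_add_lt {d : ℕ} {f : ℝ → ℝ} {b c : ℝ} (hf : StrictConvexOn ℝ (Set.Icc b c) f)
    {S B H : Matrix (Fin d) (Fin d) ℂ} (hS : S.IsHermitian) (hB : B.PosSemidef)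
    (hH : H.PosSemidef) (hSB : S * B = c • B) (hSH : S * H = b • H)
    (htr : B.trace = H.trace) (hlt : B.trace < ((c - b : ℝ) : ℂ)) (hB0 : B ≠ 0) :
    potential f (S - B + H) < potential f S := by
  have hbc : b ≠ c := (sub_pos.mp (Complex.zero_lt_real.mp (hB.trace_nonneg.trans_lt hlt))).ne
  obtain ⟨U, σ, β, η, rfl, rfl, rfl⟩ := exists_eq_spectralHom_of_mul_eq_smul hS hB.isHermitian
    hH.isHermitian hbc hSB hSH
  have hinj := spectralHom_injective U
  rw [← map_mul, ← map_smul] at hSB hSH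
  rw [trace_spectralHom, trace_spectralHom] at htr
  rw [trace_spectralHom] at hlt
  rw [← map_sub, ← map_add, potential_spectralHom, potential_spectralHom]
  refine sum_comp_sub_add_lt hf ((posSemidef_spectralHom_iff U).mp hB)
    ((posSemidef_spectralHom_iff U).mp hH) (hinj hSB) (hinj hSH) (RCLike.ofReal_injective htr)
    (RCLike.ofReal_lt_ofReal.mp hlt) ?_
  rintro rfl
  exact hB0 (map_zero _)

end Spreading

section FrameOperator

open Matrix

variable {d k : ℕ}

lemma frameOp_col (M : Matrix (Fin d) (Fin k) ℂ) : frameOp M.col = M * Mᴴ := by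
  ext i j
  simp [frameOp, Matrix.sum_apply, vecMulVec_apply, mul_apply, col_apply]

lemma posSemidef_frameOp (F : Fin k → Fin d → ℂ) : (frameOp F).PosSemidef := by
  have hF : frameOp F = (of F)ᵀ * ((of F)ᵀ)ᴴ := frameOp_col (of F)ᵀ
  exact hF ▸ posSemidef_self_mul_conjTranspose _

lemma ofReal_normSqVec_col (M : Matrix (Fin d) (Fin k) ℂ) (i : Fin k) :
    (normSqVec (M.col i) : ℂ) = (Mᴴ * M) i i := by
  simp [normSqVec, mul_apply, Complex.normSq_eq_conj_mul_self, col_apply]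

end FrameOperator

section Perturbation

open Matrix

variable {m ι 𝕜 : Type*} [RCLike 𝕜]

/- Here `p = α ^ 2` is the larger root of `a * p * (1 - p) = ‖z‖ ^ 2`, which is at least `1 / 2`. -/
lemma exists_smul_star_eq {a : ℝ} {z : 𝕜} (ha : 0 < a) (hz : 4 * ‖z‖ ^ 2 ≤ a) :
    ∃ (α : ℝ) (v : 𝕜), α * star v = z ∧ α ^ 2 * a + ‖v‖ ^ 2 = a ∧ ‖v‖ ^ 2 ≤ 2 * ‖z‖ ^ 2 := by
  set p := (1 + √(1 - 4 * ‖z‖ ^ 2 / a)) / 2 with hp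
  have hroot : a * (p * (1 - p)) = ‖z‖ ^ 2 := by
    have hsq := Real.sq_sqrt (sub_nonneg.mpr ((div_le_one ha).mpr hz))
    have hfactor : p * (1 - p) = ‖z‖ ^ 2 / a := by linear_combination (-1 / 4) * hsq
    rw [hfactor, mul_div_cancel₀ _ ha.ne']
  have hhalf : 1 / 2 ≤ p := by linarith [Real.sqrt_nonneg (1 - 4 * ‖z‖ ^ 2 / a)]
  have hp0 : 0 < p := by linarith
  have hsqrt : ((√p : ℝ) : 𝕜) ≠ 0 := RCLike.ofReal_ne_zero.mpr (Real.sqrt_ne_zero'.mpr hp0)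
  have hnorm : ‖star z / (√p : 𝕜)‖ ^ 2 = ‖z‖ ^ 2 / p := by
    rw [norm_div, norm_star, RCLike.norm_ofReal, div_pow, sq_abs, Real.sq_sqrt hp0.le]
  refine ⟨√p, star z / √p, ?_, ?_, ?_⟩
  · simp only [star_div₀, RCLike.star_def, RCLike.conj_ofReal, RCLike.conj_conj]
    exact mul_div_cancel₀ z hsqrt
  · rw [hnorm, Real.sq_sqrt hp0.le, ← hroot]
    field_simp
    ring
  · rw [hnorm, div_le_iff₀ hp0]
    nlinarith [sq_nonneg ‖z‖]

lemma exists_pos_four_mul_sq_le [Fintype ι] {a r : ι → ℝ} {δ : ℝ} (ha : ∀ i, 0 < a i) (hδ : 0 < δ) :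
    ∃ t : ℝ, 0 < t ∧ (∀ i, 4 * (t * r i) ^ 2 ≤ a i) ∧ ∑ i, 2 * (t * r i) ^ 2 < δ := by
  have h1 : ∀ i, ∀ᶠ t : ℝ in nhds 0, 4 * (t * r i) ^ 2 < a i := fun i =>
    (by fun_prop : Continuous fun t : ℝ => 4 * (t * r i) ^ 2).continuousAt.eventually_lt
      continuousAt_const (by simpa using ha i)
  have h2 : ∀ᶠ t : ℝ in nhds 0, ∑ i, 2 * (t * r i) ^ 2 < δ :=
    (by fun_prop : Continuous fun t : ℝ => ∑ i, 2 * (t * r i) ^ 2).continuousAt.eventually_lt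
      continuousAt_const (by simpa using hδ)
  have hsmall := ((Filter.eventually_all.mpr h1).and h2).filter_mono
    (nhdsWithin_le_nhds (s := Set.Ioi 0))
  obtain ⟨t, ⟨ht1, ht2⟩, ht⟩ := (hsmall.and self_mem_nhdsWithin).exists
  exact ⟨t, ht, fun i => (ht1 i).le, ht2⟩

variable [Fintype ι]

/-- The matrix with columns `α i • M.col i + v i • h`: each column of `M` is tilted towards the
common direction `h`. -/
def tiltColumns [DecidableEq ι] (M : Matrix m ι 𝕜) (h : m → 𝕜) (α : ι → ℝ) (v : ι → 𝕜) :
    Matrix m ι 𝕜 :=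
  M * diagonal (fun i => (α i : 𝕜)) + vecMulVec h v

variable [DecidableEq ι] {M : Matrix m ι 𝕜} {h : m → 𝕜}

lemma tiltColumns_mul_conjTranspose {α : ι → ℝ} {v : ι → 𝕜}
    (hker : M *ᵥ (fun i => α i * star (v i)) = 0) :
    tiltColumns M h α v * (tiltColumns M h α v)ᴴ =
      M * Mᴴ - M * diagonal (fun i => ((1 - α i ^ 2 : ℝ) : 𝕜)) * Mᴴ +
        (∑ i, ‖v i‖ ^ 2 : ℝ) • vecMulVec h (star h) := by
  set P := M * diagonal (fun i => (α i : 𝕜)) with hP_def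
  have hcross : P * (vecMulVec h v)ᴴ = 0 := by
    have hdiag : diagonal (fun i => (α i : 𝕜)) *ᵥ star v = fun i => α i * star (v i) :=
      funext fun i => mulVec_diagonal _ _ i
    rw [conjTranspose_vecMulVec, mul_vecMulVec, ← mulVec_mulVec, hdiag, hker, zero_vecMulVec]
  have hcross' : vecMulVec h v * Pᴴ = 0 := by
    rw [← conjTranspose_conjTranspose (vecMulVec h v), ← conjTranspose_mul, hcross,
      conjTranspose_zero]
  have hP : P * Pᴴ = M * Mᴴ - M * diagonal (fun i => ((1 - α i ^ 2 : ℝ) : 𝕜)) * Mᴴ := by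
    have hdiag : diagonal (fun i => ((1 - α i ^ 2 : ℝ) : 𝕜)) =
        1 - diagonal (fun i => (α i : 𝕜)) * (diagonal fun i => (α i : 𝕜))ᴴ := by
      rw [diagonal_conjTranspose, diagonal_mul_diagonal, ← diagonal_one, diagonal_sub]
      simp [pow_two]
    rw [hdiag, Matrix.mul_sub, Matrix.sub_mul, Matrix.mul_one, sub_sub_cancel, hP_def,
      conjTranspose_mul]
    simp only [Matrix.mul_assoc]
  have hQ : vecMulVec h v * (vecMulVec h v)ᴴ = (∑ i, ‖v i‖ ^ 2 : ℝ) • vecMulVec h (star h) := by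
    have hnorm : v ⬝ᵥ star v = ((∑ i, ‖v i‖ ^ 2 : ℝ) : 𝕜) := by
      simp [dotProduct, RCLike.mul_conj]
    rw [conjTranspose_vecMulVec, vecMulVec_mul_vecMulVec, vecMulVec_smul, hnorm,
      RCLike.real_smul_eq_coe_smul (K := 𝕜)]
  rw [tiltColumns, conjTranspose_add, Matrix.add_mul, Matrix.mul_add, Matrix.mul_add, hcross,
    hcross', hP, hQ, add_zero, zero_add]

lemma conjTranspose_tiltColumns_mul_apply [Fintype m] (hM : Mᴴ *ᵥ h = 0) (hh : star h ⬝ᵥ h = 1)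
    (α : ι → ℝ) (v : ι → 𝕜) (i : ι) :
    ((tiltColumns M h α v)ᴴ * tiltColumns M h α v) i i =
      (α i ^ 2 : ℝ) * (Mᴴ * M) i i + (‖v i‖ ^ 2 : ℝ) := by
  set P := M * diagonal (fun i => (α i : 𝕜)) with hP_def
  have hcross : Pᴴ * vecMulVec h v = 0 := by
    rw [hP_def, conjTranspose_mul, Matrix.mul_assoc, mul_vecMulVec, hM, zero_vecMulVec,
      Matrix.mul_zero]
  have hcross' : (vecMulVec h v)ᴴ * P = 0 := by
    rw [← conjTranspose_conjTranspose P, ← conjTranspose_mul, hcross, conjTranspose_zero]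
  have hP : (Pᴴ * P) i i = (α i ^ 2 : ℝ) * (Mᴴ * M) i i := by
    rw [hP_def, conjTranspose_mul, diagonal_conjTranspose, Matrix.mul_assoc, diagonal_mul,
      ← Matrix.mul_assoc, mul_diagonal]
    simp only [Pi.star_apply, RCLike.star_def, RCLike.conj_ofReal, map_pow]
    ring
  have hQ : ((vecMulVec h v)ᴴ * vecMulVec h v) i i = (‖v i‖ ^ 2 : ℝ) := by
    rw [conjTranspose_vecMulVec, vecMulVec_mul_vecMulVec, hh, one_smul, vecMulVec_apply]
    simp [RCLike.conj_mul]
  rw [tiltColumns, conjTranspose_add, Matrix.add_mul, Matrix.mul_add, Matrix.mul_add, hcross,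
    hcross', add_zero, zero_add, Matrix.add_apply, hP, hQ]

end Perturbation

section Minimizer

open Matrix

variable {d k : ℕ}

lemma exists_mulVec_eq_zero_of_rank_lt {m n K : Type*} [Fintype n] [Field K] {M : Matrix m n K}
    (h : M.rank < Fintype.card n) : ∃ z ≠ 0, M *ᵥ z = 0 := by
  by_contra! hinj
  have hker : LinearMap.ker M.mulVecLin = ⊥ :=
    (LinearMap.ker_eq_bot').mpr fun z hz => by_contra fun hz0 => hinj z hz0 hz
  rw [rank, LinearMap.finrank_range_of_inj (LinearMap.ker_eq_bot.mp hker),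
    Module.finrank_fintype_fun_eq_card] at h
  exact h.false

lemma exists_tilt_weights {ι 𝕜 : Type*} [Fintype ι] [RCLike 𝕜] {a : ι → ℝ} {z : ι → 𝕜} {δ : ℝ}
    (ha : ∀ i, 0 < a i) (hz : z ≠ 0) (hδ : 0 < δ) :
    ∃ (t : ℝ) (α : ι → ℝ) (v : ι → 𝕜), (∀ i, α i * star (v i) = t * z i) ∧
      (∀ i, α i ^ 2 * a i + ‖v i‖ ^ 2 = a i) ∧ 0 < ∑ i, ‖v i‖ ^ 2 ∧ ∑ i, ‖v i‖ ^ 2 < δ := by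
  obtain ⟨t, ht, hta, htδ⟩ := exists_pos_four_mul_sq_le (r := fun i => ‖z i‖) ha hδ
  have hnorm : ∀ i, ‖(t : 𝕜) * z i‖ = t * ‖z i‖ := fun i => by
    rw [norm_mul, RCLike.norm_ofReal, abs_of_pos ht]
  choose α v hαv hva hvz using fun i =>
    exists_smul_star_eq (z := (t : 𝕜) * z i) (ha i) ((hnorm i).symm ▸ hta i)
  obtain ⟨j, hj⟩ := Function.ne_iff.mp hz
  have hvj : v j ≠ 0 := fun h => by
    have := hαv j
    rw [h, star_zero, mul_zero] at this
    exact mul_ne_zero (RCLike.ofReal_ne_zero.mpr ht.ne') hj this.symm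
  refine ⟨t, α, v, hαv, hva, ?_, ?_⟩
  · exact sum_pos' (fun i _ => by positivity) ⟨j, mem_univ j, by positivity⟩
  · exact (sum_le_sum fun i _ => hnorm i ▸ hvz i).trans_lt htδ

lemma trace_mul_diagonal_mul_conjTranspose {m ι 𝕜 : Type*} [Fintype m] [Fintype ι] [DecidableEq ι]
    [RCLike 𝕜] (M : Matrix m ι 𝕜) (w : ι → 𝕜) :
    (M * diagonal w * Mᴴ).trace = ∑ i, w i * (Mᴴ * M) i i := by
  rw [trace_mul_cycle, trace]
  simp only [diag_apply, mul_diagonal, mul_comm]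

lemma potential_tiltColumns_lt {f : ℝ → ℝ} {b c : ℝ} (hf : StrictConvexOn ℝ (Set.Icc b c) f)
    {S₀ : Matrix (Fin d) (Fin d) ℂ} {M : Matrix (Fin d) (Fin k) ℂ}
    (hS : (S₀ + M * Mᴴ).IsHermitian) (hM : ∀ i, 0 < normSqVec (M.col i))
    (hSM : (S₀ + M * Mᴴ) * M = c • M) {h : Fin d → ℂ} (hh : star h ⬝ᵥ h = 1)
    (hSh : (S₀ + M * Mᴴ) *ᵥ h = b • h) {α : Fin k → ℝ} {v : Fin k → ℂ}
    (hker : M *ᵥ (fun i => α i * star (v i)) = 0)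
    (hnorm : ∀ i, α i ^ 2 * normSqVec (M.col i) + ‖v i‖ ^ 2 = normSqVec (M.col i))
    (hpos : 0 < ∑ i, ‖v i‖ ^ 2) (hlt : ∑ i, ‖v i‖ ^ 2 < c - b) :
    potential f (S₀ + tiltColumns M h α v * (tiltColumns M h α v)ᴴ) <
      potential f (S₀ + M * Mᴴ) := by
  set w : Fin k → ℝ := fun i => 1 - α i ^ 2
  set B := M * diagonal (fun i => (w i : ℂ)) * Mᴴ with hB
  set H := (∑ i, ‖v i‖ ^ 2) • vecMulVec h (star h) with hH
  have hw : ∀ i, w i * normSqVec (M.col i) = ‖v i‖ ^ 2 := fun i => by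
    linear_combination -hnorm i
  have hw0 : ∀ i, 0 ≤ (w i : ℂ) := fun i =>
    Complex.zero_le_real.mpr (nonneg_of_mul_nonneg_left (hw i ▸ sq_nonneg _) (hM i))
  have htrB : B.trace = ((∑ i, ‖v i‖ ^ 2 : ℝ) : ℂ) := by
    rw [hB, trace_mul_diagonal_mul_conjTranspose, Complex.ofReal_sum]
    exact sum_congr rfl fun i _ => by rw [← ofReal_normSqVec_col, ← hw, Complex.ofReal_mul]
  have htrH : H.trace = ((∑ i, ‖v i‖ ^ 2 : ℝ) : ℂ) := by
    rw [hH, trace_smul, trace_vecMulVec, dotProduct_comm, hh, Complex.real_smul, mul_one]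
  have hSB : (S₀ + M * Mᴴ) * B = c • B := by
    rw [hB, ← Matrix.mul_assoc, ← Matrix.mul_assoc, hSM, smul_mul, smul_mul]
  have hSH : (S₀ + M * Mᴴ) * H = b • H := by
    rw [hH, mul_smul_comm, mul_vecMulVec, hSh, smul_vecMulVec, smul_comm]
  have hsum : S₀ + tiltColumns M h α v * (tiltColumns M h α v)ᴴ = S₀ + M * Mᴴ - B + H := by
    rw [tiltColumns_mul_conjTranspose hker, ← add_assoc, ← add_sub_assoc]
    rfl
  rw [hsum]
  refine potential_sub_add_lt hf hS
    ((posSemidef_diagonal_iff.mpr hw0).mul_mul_conjTranspose_same M)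
    ((posSemidef_vecMulVec_self_star h).smul hpos.le) hSB hSH (htrB.trans htrH.symm)
    (htrB.trans_lt (Complex.real_lt_real.mpr hlt)) fun hB0 => ?_
  rw [hB0, trace_zero] at htrB
  exact hpos.ne (Complex.ofReal_injective htrB)

lemma exists_potential_lt_of_rank_lt {f : ℝ → ℝ} {b c : ℝ} (hbc : b < c)
    (hf : StrictConvexOn ℝ (Set.Icc b c) f) {S₀ : Matrix (Fin d) (Fin d) ℂ}
    {M : Matrix (Fin d) (Fin k) ℂ} (hS : (S₀ + M * Mᴴ).IsHermitian)
    (hM : ∀ i, 0 < normSqVec (M.col i)) (hrank : M.rank < k)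
    (hSM : (S₀ + M * Mᴴ) * M = c • M) {h : Fin d → ℂ} (hh : star h ⬝ᵥ h = 1)
    (hMh : Mᴴ *ᵥ h = 0) (hSh : (S₀ + M * Mᴴ) *ᵥ h = b • h) :
    ∃ M' : Matrix (Fin d) (Fin k) ℂ, (∀ i, normSqVec (M'.col i) = normSqVec (M.col i)) ∧
      potential f (S₀ + M' * M'ᴴ) < potential f (S₀ + M * Mᴴ) := by
  obtain ⟨z, hz, hMz⟩ := exists_mulVec_eq_zero_of_rank_lt (hrank.trans_eq (Fintype.card_fin k).symm)
  obtain ⟨t, α, v, hαv, hnorm, hpos, hlt⟩ := exists_tilt_weights hM hz (sub_pos.mpr hbc)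
  have hker : M *ᵥ (fun i => α i * star (v i)) = 0 := by
    have htz : (fun i => α i * star (v i)) = (t : ℂ) • z := funext hαv
    rw [htz, mulVec_smul, hMz, smul_zero]
  refine ⟨tiltColumns M h α v, fun i => Complex.ofReal_injective ?_,
    potential_tiltColumns_lt hf hS hM hSM hh hSh hker hnorm hpos hlt⟩
  rw [ofReal_normSqVec_col, conjTranspose_tiltColumns_mul_apply hMh hh, ← ofReal_normSqVec_col]
  simpa using congrArg Complex.ofReal (hnorm i)

lemma exists_unit_eigenvector_of_not_posSemidef_sub {n 𝕜 : Type*} [Fintype n] [DecidableEq n]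
    [RCLike 𝕜] {S : Matrix n n 𝕜} (hS : S.PosSemidef) {c : ℝ}
    (hc : ¬ (S - c • (1 : Matrix n n 𝕜)).PosSemidef) :
    ∃ b ∈ Set.Ico 0 c, ∃ h : n → 𝕜, star h ⬝ᵥ h = 1 ∧ S *ᵥ h = b • h := by
  have hN : (S - c • (1 : Matrix n n 𝕜)).IsHermitian :=
    hS.isHermitian.sub (isHermitian_one.smul (IsSelfAdjoint.all c))
  rw [hN.posSemidef_iff_eigenvalues_nonneg, Pi.le_def] at hc
  push Not at hc
  obtain ⟨j, hj⟩ := hc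
  set h : n → 𝕜 := ⇑(hN.eigenvectorBasis j)
  have hh : star h ⬝ᵥ h = 1 := by
    rw [dotProduct_comm, ← EuclideanSpace.inner_eq_star_dotProduct]
    exact inner_self_eq_one_of_norm_eq_one (hN.eigenvectorBasis.orthonormal.1 j)
  have hSh : S *ᵥ h = (c + hN.eigenvalues j) • h := by
    have hNh := hN.mulVec_eigenvectorBasis j
    rw [sub_mulVec, sub_eq_iff_eq_add, smul_mulVec, one_mulVec] at hNh
    rw [hNh, add_smul, add_comm]
  have hnonneg : 0 ≤ c + hN.eigenvalues j := by
    have hquad := hS.dotProduct_mulVec_nonneg h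
    rwa [hSh, dotProduct_smul, hh, RCLike.real_smul_eq_coe_mul, mul_one, RCLike.ofReal_nonneg]
      at hquad
  exact ⟨_, ⟨hnonneg, add_lt_of_neg_right c hj⟩, h, hh, hSh⟩

lemma posSemidef_sub_smul_one_of_minimizer {f : ℝ → ℝ} (hf : StrictConvexOn ℝ (Set.Ici 0) f)
    {S₀ : Matrix (Fin d) (Fin d) ℂ} (hS₀ : S₀.PosSemidef)
    {M : Matrix (Fin d) (Fin k) ℂ} (hM : ∀ i, 0 < normSqVec (M.col i)) (hrank : M.rank < k)
    (hmin : ∀ M' : Matrix (Fin d) (Fin k) ℂ,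
      (∀ i, normSqVec (M'.col i) = normSqVec (M.col i)) →
        potential f (S₀ + M * Mᴴ) ≤ potential f (S₀ + M' * M'ᴴ))
    {c : ℝ} (hSM : (S₀ + M * Mᴴ) * M = c • M) :
    (S₀ + M * Mᴴ - c • (1 : Matrix (Fin d) (Fin d) ℂ)).PosSemidef := by
  have hS := hS₀.add (posSemidef_self_mul_conjTranspose M)
  by_contra hneg
  obtain ⟨b, ⟨hb0, hbc⟩, h, hh, hSh⟩ := exists_unit_eigenvector_of_not_posSemidef_sub hS hneg
  have hMS : Mᴴ * (S₀ + M * Mᴴ) = c • Mᴴ := by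
    rw [← hS.isHermitian.eq, ← conjTranspose_mul, hSM, conjTranspose_smul, star_trivial]
  have hMh : Mᴴ *ᵥ h = 0 := by
    have hsmul : b • (Mᴴ *ᵥ h) = c • (Mᴴ *ᵥ h) := by
      rw [← mulVec_smul, ← hSh, mulVec_mulVec, hMS, smul_mulVec]
    by_contra hne
    exact hbc.ne (smul_left_injective ℝ hne hsmul)
  obtain ⟨M', hM', hlt⟩ := exists_potential_lt_of_rank_lt hbc
    (hf.subset (fun x hx => hb0.trans hx.1) (convex_Icc b c)) hS.isHermitian hM hrank hSM hh hMh hSh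
  exact (hmin M' hM').not_gt hlt

end Minimizer

section WaterFilling

open Matrix

variable {d k : ℕ}

lemma eq_max_sub_of_add_mul_eq {ι : Type*} {x y : ι → ℝ} {c : ℝ} (hy : 0 ≤ y)
    (hxy : 0 ≤ x + y - c • 1) (h : (x + y) * y = c • y) :
    y = (fun t => max (c - t) 0) ∘ x := by
  ext i
  have hyi : 0 ≤ y i := hy i
  have hxyi : 0 ≤ x i + y i - c := by simpa using hxy i
  have hi : (x i + y i) * y i = c * y i := congrFun h i
  rcases eq_or_ne (y i) 0 with h0 | h0
  · simpa [h0] using hxyi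
  · have hc := mul_right_cancel₀ h0 hi
    rw [Function.comp_apply, ← hc, add_sub_cancel_left, max_eq_left hyi]

lemma eigsDesc_eq_max_sub_eigsAsc {S₀ P : Matrix (Fin d) (Fin d) ℂ} {c : ℝ}
    (hS₀ : S₀.IsHermitian) (hP : P.PosSemidef)
    (hpos : (S₀ + P - c • (1 : Matrix (Fin d) (Fin d) ℂ)).PosSemidef)
    (h : (S₀ + P) * P = c • P) :
    eigsDesc P = fun i => max (c - eigsAsc S₀ i) 0 := by
  have hcomm : Commute S₀ P := by
    simpa using (commute_of_isHermitian_of_mul_eq_smul (hS₀.add hP.isHermitian)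
      hP.isHermitian h).sub_left (Commute.refl P)
  obtain ⟨U, x, hx⟩ := exists_eq_spectralHom_of_commute (A := ![S₀, P])
    (by simp [Fin.forall_fin_succ, hS₀, hP.isHermitian])
    (by simp [Pairwise, Fin.forall_fin_succ, Function.onFun, hcomm, hcomm.symm])
  obtain ⟨x₀, rfl⟩ : ∃ x₀, S₀ = spectralHom U x₀ := ⟨x 0, hx 0⟩
  obtain ⟨y, rfl⟩ : ∃ y, P = spectralHom U y := ⟨x 1, hx 1⟩
  rw [← map_add, ← map_one (spectralHom U), ← map_smul, ← map_sub,
    posSemidef_spectralHom_iff] at hpos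
  rw [← map_add, ← map_mul, ← map_smul] at h
  have hy := eq_max_sub_of_add_mul_eq ((posSemidef_spectralHom_iff U).mp hP) hpos
    (spectralHom_injective U h)
  have hanti : Antitone fun t => max (c - t) 0 := fun _ _ hst =>
    max_le_max_right 0 (sub_le_sub_left hst c)
  rw [eigsDesc_spectralHom, eigsAsc_spectralHom, hy, sortDesc_comp_of_antitone hanti]
  rfl

end WaterFilling

section SchurHorn

open Matrix

variable {m n 𝕜 : Type*} [Fintype m] [DecidableEq m] [Fintype n] [DecidableEq n] [RCLike 𝕜]

lemma sum_norm_sq_row_unitary (U : unitaryGroup n 𝕜) (i : n) :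
    ∑ l, ‖(U : Matrix n n 𝕜) i l‖ ^ 2 = 1 := by
  have h : ((U : Matrix n n 𝕜) * (U : Matrix n n 𝕜)ᴴ) i i = 1 := by
    rw [← star_eq_conjTranspose, Unitary.mul_star_self_of_mem U.2, one_apply_eq]
  rw [mul_apply] at h
  refine RCLike.ofReal_injective (K := 𝕜) ?_
  simpa only [RCLike.ofReal_sum, RCLike.ofReal_pow, RCLike.ofReal_one, conjTranspose_apply,
    RCLike.star_def, RCLike.mul_conj] using h

lemma sum_norm_sq_col_unitary (U : unitaryGroup n 𝕜) (l : n) :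
    ∑ i, ‖(U : Matrix n n 𝕜) i l‖ ^ 2 = 1 := by
  simpa [star_apply] using sum_norm_sq_row_unitary (star U) l

lemma re_diag_eq_sum_norm_sq_mul_eigenvalues {A : Matrix n n 𝕜} (hA : A.IsHermitian) (i : n) :
    RCLike.re (A i i) =
      ∑ l, ‖(hA.eigenvectorUnitary : Matrix n n 𝕜) i l‖ ^ 2 * hA.eigenvalues l := by
  have h := congrFun (congrFun hA.spectral_theorem i) i
  rw [Unitary.conjStarAlgAut_apply, mul_apply] at h
  rw [h, map_sum]
  refine sum_congr rfl fun l _ => ?_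
  rw [mul_diagonal, star_apply, RCLike.star_def, mul_right_comm, RCLike.mul_conj,
    ← RCLike.ofReal_pow, Function.comp_apply, ← RCLike.ofReal_mul, RCLike.ofReal_re]

lemma sum_comp_re_diag_le {A : Matrix n n 𝕜} (hA : A.IsHermitian) {f : ℝ → ℝ}
    (hf : ConvexOn ℝ Set.univ f) :
    ∑ i, f (RCLike.re (A i i)) ≤ ∑ l, f (hA.eigenvalues l) := by
  set U := hA.eigenvectorUnitary
  calc ∑ i, f (RCLike.re (A i i))
      ≤ ∑ i, ∑ l, ‖(U : Matrix n n 𝕜) i l‖ ^ 2 * f (hA.eigenvalues l) := sum_le_sum fun i _ => by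
        rw [re_diag_eq_sum_norm_sq_mul_eigenvalues hA]
        exact hf.map_sum_le (fun l _ => sq_nonneg _) (sum_norm_sq_row_unitary U i)
          fun l _ => Set.mem_univ _
    _ = ∑ l, f (hA.eigenvalues l) := by
        rw [sum_comm]
        simp only [← sum_mul, sum_norm_sq_col_unitary, one_mul]

lemma sum_comp_eigenvalues_conjTranspose_mul_self {φ : ℝ → ℝ} (hφ : φ 0 = 0) (M : Matrix m n 𝕜) :
    ∑ i, φ ((isHermitian_conjTranspose_mul_self M).eigenvalues i) =
      ∑ i, φ ((isHermitian_mul_conjTranspose_self M).eigenvalues i) := by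
  set hA := isHermitian_conjTranspose_mul_self M
  set hB := isHermitian_mul_conjTranspose_self M
  have hroots := congrArg Polynomial.roots (charpoly_mul_comm' Mᴴ M)
  rw [Polynomial.roots_mul (mul_ne_zero (by simp) (charpoly_monic _).ne_zero),
    Polynomial.roots_mul (mul_ne_zero (by simp) (charpoly_monic _).ne_zero),
    Polynomial.roots_X_pow, Polynomial.roots_X_pow, hA.roots_charpoly_eq_eigenvalues,
    hB.roots_charpoly_eq_eigenvalues] at hroots
  simpa [hφ, Multiset.map_nsmul, Multiset.sum_nsmul] using
    congrArg (fun s => (s.map (φ ∘ RCLike.re)).sum) hroots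

end SchurHorn

section FrameMajorization

open Matrix

variable {d k : ℕ}

lemma sum_eigsDesc_mul_conjTranspose (M : Matrix (Fin d) (Fin k) ℂ) :
    ∑ i, eigsDesc (M * Mᴴ) i = ∑ i, normSqVec (M.col i) := by
  refine Complex.ofReal_injective ?_
  have hM := isHermitian_mul_conjTranspose_self M
  calc ((∑ i, eigsDesc (M * Mᴴ) i : ℝ) : ℂ)
      = ∑ i, (hM.eigenvalues i : ℂ) := by
        rw [← Complex.ofReal_sum]
        exact congrArg _ (sum_comp_eigsDesc hM id)
    _ = (Mᴴ * M).trace := hM.trace_eq_sum_eigenvalues.symm.trans (trace_mul_comm _ _)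
    _ = ((∑ i, normSqVec (M.col i) : ℝ) : ℂ) := by
        rw [Complex.ofReal_sum]
        exact sum_congr rfl fun i _ => (ofReal_normSqVec_col M i).symm

lemma majorizedByPad_normSqVec_col_eigsDesc (M : Matrix (Fin d) (Fin k) ℂ) :
    MajorizedByPad (fun i => normSqVec (M.col i)) (eigsDesc (M * Mᴴ)) := by
  refine majorizedByPad_of_sum_max_sub_le (eigsDesc_nonneg (posSemidef_self_mul_conjTranspose M))
    (sum_eigsDesc_mul_conjTranspose M).symm fun v hv => ?_
  have hconv : ConvexOn ℝ Set.univ fun t : ℝ => max (t - v) 0 :=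
    ((convexOn_id convex_univ).sub (concaveOn_const v convex_univ)).sup
      (convexOn_const 0 convex_univ)
  have hdiag : ∀ i, normSqVec (M.col i) = RCLike.re ((Mᴴ * M) i i) := fun i => by
    rw [← ofReal_normSqVec_col]
    exact (Complex.ofReal_re _).symm
  simp only [hdiag]
  calc ∑ i, max (RCLike.re ((Mᴴ * M) i i) - v) 0
      ≤ ∑ i, max ((isHermitian_conjTranspose_mul_self M).eigenvalues i - v) 0 :=
        sum_comp_re_diag_le _ hconv
    _ = ∑ i, max ((isHermitian_mul_conjTranspose_self M).eigenvalues i - v) 0 :=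
        sum_comp_eigenvalues_conjTranspose_mul_self (φ := fun t => max (t - v) 0)
          (max_eq_right (by linarith)) M
    _ = ∑ i, max (eigsDesc (M * Mᴴ) i - v) 0 :=
        (sum_comp_eigsDesc _ fun t => max (t - v) 0).symm

end FrameMajorization

section Completion

open Matrix

variable {d k : ℕ}

lemma mul_eq_smul_of_mul_mul_conjTranspose_eq {m n 𝕜 : Type*} [Fintype m] [Fintype n] [RCLike 𝕜]
    {S : Matrix m m 𝕜} {M : Matrix m n 𝕜} {c : ℝ} (h : S * (M * Mᴴ) = c • (M * Mᴴ)) :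
    S * M = c • M := by
  classical
  have hsub : (S - c • (1 : Matrix m m 𝕜)) * (M * Mᴴ) = 0 := by
    rw [Matrix.sub_mul, h, smul_mul, Matrix.one_mul, sub_self]
  rwa [mul_self_mul_conjTranspose_eq_zero, Matrix.sub_mul, smul_mul, Matrix.one_mul, sub_eq_zero]
    at hsub

lemma eigsDesc_eq_max_sub_eigsAsc_of_minimizer {f : ℝ → ℝ} (hf : StrictConvexOn ℝ (Set.Ici 0) f)
    {S₀ : Matrix (Fin d) (Fin d) ℂ} (hS₀ : S₀.PosSemidef) {M : Matrix (Fin d) (Fin k) ℂ}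
    (hM : ∀ i, 0 < normSqVec (M.col i)) (hrank : (M * Mᴴ).rank < k)
    (hmin : ∀ M' : Matrix (Fin d) (Fin k) ℂ,
      (∀ i, normSqVec (M'.col i) = normSqVec (M.col i)) →
        potential f (S₀ + M * Mᴴ) ≤ potential f (S₀ + M' * M'ᴴ))
    {c : ℝ} (hSM : (S₀ + M * Mᴴ) * (M * Mᴴ) = c • (M * Mᴴ)) :
    eigsDesc (M * Mᴴ) = fun i => max (c - eigsAsc S₀ i) 0 := by
  rw [rank_self_mul_conjTranspose] at hrank
  exact eigsDesc_eq_max_sub_eigsAsc hS₀.isHermitian (posSemidef_self_mul_conjTranspose M)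
    (posSemidef_sub_smul_one_of_minimizer hf hS₀ hM hrank hmin
      (mul_eq_smul_of_mul_mul_conjTranspose_eq hSM)) hSM

lemma get1_lt_and_le_get1_succ {x : Fin d → ℝ} {c : ℝ} {s : ℕ} (hs : 0 < s) (hsd : s < d)
    (h : ∀ i : Fin d, x i < c ↔ (i : ℕ) < s) : get1 x s < c ∧ c ≤ get1 x (s + 1) := by
  rw [get1, get1, dif_pos (by omega), dif_pos (by omega)]
  exact ⟨(h _).mpr (Nat.sub_one_lt_of_lt hs), not_lt.mp ((h _).not.mpr (lt_irrefl s))⟩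

lemma exists_eigsDesc_ne_zero (hk : 0 < k) {M : Matrix (Fin d) (Fin k) ℂ}
    (hM : ∀ i, 0 < normSqVec (M.col i)) : ∃ i, eigsDesc (M * Mᴴ) i ≠ 0 := by
  have hsum : ∑ i, eigsDesc (M * Mᴴ) i ≠ 0 := by
    rw [sum_eigsDesc_mul_conjTranspose]
    exact (sum_pos (fun i _ => hM i) ⟨⟨0, hk⟩, mem_univ _⟩).ne'
  obtain ⟨i, -, hi⟩ := exists_ne_zero_of_sum_ne_zero hsum
  exact ⟨i, hi⟩

end Completion

theorem stmt_10_general {d n₀ k : ℕ} (F₀ : Fin n₀ → Fin d → ℂ) (a : Fin k → ℝ)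
    (ha_pos : ∀ i, 0 < a i) (f : ℝ → ℝ) (hf : StrictConvexOn ℝ (Set.Ici 0) f)
    (G : Fin k → Fin d → ℂ) (hG : ∀ i, normSqVec (G i) = a i)
    (hmin : ∀ G' : Fin k → Fin d → ℂ, (∀ i, normSqVec (G' i) = a i) →
      potential f (frameOp F₀ + frameOp G) ≤ potential f (frameOp F₀ + frameOp G'))
    (c : ℝ) (hk : (frameOp G).rank < k) (hW : (frameOp G).rank < d)
    (hSW : ∀ x : Fin d → ℂ, (frameOp F₀ + frameOp G).mulVec ((frameOp G).mulVec x) =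
      (c : ℂ) • (frameOp G).mulVec x)
    (s : ℕ) (hs : s = (frameOp G).rank)
    (hsmu : ∀ i : Fin d, eigsDesc (frameOp G) i ≠ 0 ↔ (i : ℕ) < s) :
    get1 (eigsAsc (frameOp F₀)) s < c ∧ c ≤ get1 (eigsAsc (frameOp F₀)) (s + 1) ∧
    (∀ i : Fin d, eigsAsc (frameOp F₀) i + eigsDesc (frameOp G) i =
      if (i : ℕ) < s then c else eigsAsc (frameOp F₀) i) ∧
    Monotone (fun i => eigsAsc (frameOp F₀) i + eigsDesc (frameOp G) i) ∧
    (∀ i, eigsAsc (frameOp F₀) i ≤ eigsAsc (frameOp F₀) i + eigsDesc (frameOp G) i) ∧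
    MajorizedByPad a (eigsDesc (frameOp G)) := by
  obtain rfl : (fun i => normSqVec (G i)) = a := funext hG
  obtain ⟨M, rfl⟩ : ∃ M : Matrix (Fin d) (Fin k) ℂ, G = M.col := ⟨(Matrix.of G).transpose, rfl⟩
  rw [frameOp_col] at *
  have hSP : (frameOp F₀ + M * M.conjTranspose) * (M * M.conjTranspose) =
      c • (M * M.conjTranspose) := Matrix.ext_of_mulVec_single fun j => by
    simpa only [Matrix.mulVec_mulVec, Matrix.smul_mulVec, Complex.coe_smul] using
      hSW (Pi.single j 1)
  have hmu := eigsDesc_eq_max_sub_eigsAsc_of_minimizer hf (posSemidef_frameOp F₀) ha_pos hk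
    (fun M' hM' => frameOp_col M' ▸ hmin M'.col hM') hSP
  have hlt : ∀ i : Fin d, eigsAsc (frameOp F₀) i < c ↔ (i : ℕ) < s := fun i => by
    simp [← hsmu, hmu]
  have hadd : ∀ i, eigsAsc (frameOp F₀) i + eigsDesc (M * M.conjTranspose) i =
      max c (eigsAsc (frameOp F₀) i) := fun i => by
    rw [hmu, ← max_add_add_left, add_sub_cancel, add_zero]
  obtain ⟨i, hi⟩ := exists_eigsDesc_ne_zero hk.pos ha_pos
  obtain ⟨hget, hget'⟩ := get1_lt_and_le_get1_succ (((hsmu i).mp hi).pos) (hs.trans_lt hW) hlt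
  refine ⟨hget, hget', fun i => ?_, ?_, fun i => ?_, majorizedByPad_normSqVec_col_eigsDesc M⟩
  · simp only [hadd, ← hlt, max_comm c, max_def_lt]
  · simpa only [hadd] using monotone_const.max (eigsAsc_monotone (frameOp F₀))
  · exact (le_max_right _ _).trans_eq (hadd i).symm

theorem stmt_10 {d n₀ k : ℕ} (hdk : d ≤ k)
    (F₀ : Fin n₀ → Fin d → ℂ) (a : Fin k → ℝ)
    (ha_pos : ∀ i, 0 < a i) (ha_mono : Antitone a)
    (f : ℝ → ℝ) (hf : StrictConvexOn ℝ (Set.Ici 0) f) (hf0 : ∀ x ∈ Set.Ici (0 : ℝ), 0 ≤ f x)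
    (G : Fin k → Fin d → ℂ) (hG : ∀ i, normSqVec (G i) = a i)
    (hop : eigsDesc (frameOp F₀ + frameOp G) =
      sortDesc (fun i => eigsAsc (frameOp F₀) i + eigsDesc (frameOp G) i))
    (hmin : ∀ G' : Fin k → Fin d → ℂ, (∀ i, normSqVec (G' i) = a i) →
      potential f (frameOp F₀ + frameOp G) ≤ potential f (frameOp F₀ + frameOp G'))
    (c : ℝ) (hc : 0 < c)
    (hW : (frameOp G).rank < d)
    (hSW : ∀ x : Fin d → ℂ, (frameOp F₀ + frameOp G).mulVec ((frameOp G).mulVec x) =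
      (c : ℂ) • (frameOp G).mulVec x)
    (s : ℕ) (hs : s = (frameOp G).rank)
    (hsmu : ∀ i : Fin d, eigsDesc (frameOp G) i ≠ 0 ↔ (i : ℕ) < s) :
    get1 (eigsAsc (frameOp F₀)) s < c ∧ c ≤ get1 (eigsAsc (frameOp F₀)) (s + 1) ∧
    (∀ i : Fin d, eigsAsc (frameOp F₀) i + eigsDesc (frameOp G) i =
      if (i : ℕ) < s then c else eigsAsc (frameOp F₀) i) ∧
    Monotone (fun i => eigsAsc (frameOp F₀) i + eigsDesc (frameOp G) i) ∧
    (∀ i, eigsAsc (frameOp F₀) i ≤ eigsAsc (frameOp F₀) i + eigsDesc (frameOp G) i) ∧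
    MajorizedByPad a (eigsDesc (frameOp G)) :=
  stmt_10_general F₀ a ha_pos f hf G hG hmin c (hW.trans_le hdk) hW hSW s hs hsmu
end
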